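/- arXiv:1006.5883 — 2 statements merged into one kernel-verified Lean document; each statement's English description precedes it below -/
import Mathlib

section
/- Let F = ⋃_{j=1}^J φ_j(F) ⊂ ℝ^d be as in the main theorem (similitudes with ratios r_j, D the Moran root, dim[F] = d, Tileset, Nontriviality and Pearse–Winter Conditions, D > d−1), but now assume T_0 = C ∖ ⋃_j φ_j(C) has finitely many connected components G_1,…,G_Q, each diphase Steiner-like with inradius g_q and coefficients κ_0(G_q),…,κ_d(G_q). If Φ is of non-lattice type, then F is Minkowski measurable with Minkowski content M(F) = (∑_{q=1}^Q ∑_{m=0}^d (g_q^{D−m}/(D−m)) κ_m(G_q)) / (∑_{j=1}^J r_j^D log r_j^{−1}); if Φ is of lattice type, then F is not Minkowski measurable but the average Minkowski content exists and is given by the same expression. -/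
open MeasureTheory Filter

/-- The inner `ε`-neighborhood of a set `G`:
`{x ∈ closure G | dist(x, Gᶜ) ≤ ε}`. -/
def innerNbhd {d : ℕ} (G : Set (EuclideanSpace ℝ (Fin d))) (ε : ℝ) :
    Set (EuclideanSpace ℝ (Fin d)) :=
  {x ∈ closure G | Metric.infDist x Gᶜ ≤ ε}


structure RS {J : ℕ} (p τ : Fin J → ℝ) (Z z : ℝ → ℝ) (α β A K : ℝ) : Prop where
  hp : ∀ j, 0 < p j
  hsum : ∑ j, p j = 1
  hτ : ∀ j, 0 < τ j
  hα : 0 < α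
  hβ : 0 < β
  Zm : Measurable Z
  Z0 : ∀ t, 0 ≤ Z t
  ZA : ∀ t, Z t ≤ A * Real.exp (α * t)
  zK : ∀ t, |z t| ≤ K * Real.exp (-β * t)
  eq : ∀ t, Z t = ∑ j, p j * Z (t - τ j) + z t
  slow : ∀ t h, 0 ≤ h → Z (t + h) ≤ Real.exp (α * h) * Z t

namespace RS

variable {J : ℕ} {p τ : Fin J → ℝ} {Z z : ℝ → ℝ} {α β A K : ℝ}

lemma exists_min (h : RS p τ Z z α β A K) : ∃ δ, 0 < δ ∧ ∀ j, δ ≤ τ j := by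
  have hne : (Finset.univ : Finset (Fin J)).Nonempty := by
    by_contra hc
    have h1 := h.hsum
    rw [Finset.not_nonempty_iff_eq_empty.1 hc] at h1
    simp at h1
  obtain ⟨j, -, hj⟩ := Finset.exists_min_image Finset.univ τ hne
  exact ⟨τ j, h.hτ j, fun k => hj k (Finset.mem_univ _)⟩

lemma exists_max (h : RS p τ Z z α β A K) : ∃ δ, 0 < δ ∧ ∀ j, τ j ≤ δ := by
  have hne : (Finset.univ : Finset (Fin J)).Nonempty := by
    by_contra hc
    have h1 := h.hsum
    rw [Finset.not_nonempty_iff_eq_empty.1 hc] at h1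
    simp at h1
  obtain ⟨j, -, hj⟩ := Finset.exists_max_image Finset.univ τ hne
  exact ⟨τ j, h.hτ j, fun k => hj k (Finset.mem_univ _)⟩

lemma A0 (h : RS p τ Z z α β A K) : 0 ≤ A := by
  have h1 := h.Z0 0
  have h2 := h.ZA 0
  simp at h2
  linarith

lemma K0 (h : RS p τ Z z α β A K) : 0 ≤ K := by
  have h1 := abs_nonneg (z 0)
  have h2 := h.zK 0
  simp at h2
  linarith [abs_nonneg (z 0)]

lemma bdd (h : RS p τ Z z α β A K) : ∃ B, 0 < B ∧ ∀ t, Z t ≤ B := by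
  obtain ⟨δ, hδ, hmin⟩ := h.exists_min
  obtain ⟨M, hM, hmax⟩ := h.exists_max
  have hβ := h.hβ
  set s : ℝ := ∑ j, p j * Real.exp (β * τ j) with hs
  have hs1 : Real.exp (β * δ) ≤ s := by
    calc Real.exp (β * δ) = ∑ j, p j * Real.exp (β * δ) := by
          rw [← Finset.sum_mul, h.hsum, one_mul]
      _ ≤ s := by
          apply Finset.sum_le_sum
          intro j _
          apply mul_le_mul_of_nonneg_left _ (h.hp j).le
          apply Real.exp_le_exp.2
          exact mul_le_mul_of_nonneg_left (hmin j) hβ.le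
  have hs2 : 1 < s := lt_of_lt_of_le (by
    rw [Real.one_lt_exp_iff]; positivity) hs1
  set c : ℝ := K / (s - 1) with hc
  have hc0 : 0 ≤ c := div_nonneg h.K0 (by linarith)
  have hcs : c * (s - 1) = K := by
    rw [hc]; field_simp [show s - 1 ≠ 0 by linarith]
  set B : ℝ := A + c * Real.exp (β * M) + 1 with hB
  have hA := h.A0
  have hBA : A ≤ B := by
    have : 0 ≤ c * Real.exp (β * M) := by positivity
    linarith
  have key : ∀ n : ℕ, ∀ t, -M ≤ t → t ≤ n * δ → Z t ≤ B - c * Real.exp (-β * t) := by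
    intro n
    have base : ∀ t, -M ≤ t → t ≤ 0 → Z t ≤ B - c * Real.exp (-β * t) := by
      intro t h1 h2
      have h3 := h.ZA t
      have h4 : Real.exp (α * t) ≤ 1 := by
        rw [Real.exp_le_one_iff]
        exact mul_nonpos_of_nonneg_of_nonpos h.hα.le h2
      have h5 : Real.exp (-β * t) ≤ Real.exp (β * M) := by
        apply Real.exp_le_exp.2
        nlinarith
      have h6 := mul_le_mul_of_nonneg_left h4 hA
      have h7 := mul_le_mul_of_nonneg_left h5 hc0
      linarith
    induction n with
    | zero => intro t h1 h2; exact base t h1 (by simpa using h2)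
    | succ n ih =>
      intro t h1 h2
      rcases le_or_gt t 0 with h3 | h3
      · exact base t h1 h3
      have h4 : ∀ j, Z (t - τ j) ≤ B - c * Real.exp (-β * t) * Real.exp (β * τ j) := by
        intro j
        have := ih (t - τ j) (by linarith [hmax j]) (by
          push_cast at h2; linarith [hmin j])
        have e : Real.exp (-β * (t - τ j)) = Real.exp (-β * t) * Real.exp (β * τ j) := by
          rw [← Real.exp_add]; ring_nf
        rw [e, ← mul_assoc] at this
        exact this
      have h5 : ∑ j, p j * Z (t - τ j) ≤ B - c * Real.exp (-β * t) * s := by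
        calc ∑ j, p j * Z (t - τ j)
            ≤ ∑ j, p j * (B - c * Real.exp (-β * t) * Real.exp (β * τ j)) :=
              Finset.sum_le_sum fun j _ => mul_le_mul_of_nonneg_left (h4 j) (h.hp j).le
          _ = (∑ j, p j) * B - c * Real.exp (-β * t) * s := by
              rw [hs, Finset.mul_sum, Finset.sum_mul, ← Finset.sum_sub_distrib]
              apply Finset.sum_congr rfl; intros; ring
          _ = _ := by rw [h.hsum, one_mul]
      have h6 := h.zK t
      have h7 := le_abs_self (z t)
      have h8 : c * Real.exp (-β * t) * s = K * Real.exp (-β * t) + c * Real.exp (-β * t) := by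
        rw [← hcs]; ring
      rw [h.eq t]
      linarith
  refine ⟨B, by rw [hB]; positivity, fun t => ?_⟩
  rcases le_or_gt t 0 with h3 | h3
  · have h4 : Real.exp (α * t) ≤ 1 := by
      rw [Real.exp_le_one_iff]
      exact mul_nonpos_of_nonneg_of_nonpos h.hα.le h3
    have h6 := mul_le_mul_of_nonneg_left h4 hA
    linarith [h.ZA t]
  · obtain ⟨n, hn⟩ := exists_nat_ge (t / δ)
    have := key n t (by linarith) (by rwa [div_le_iff₀ hδ] at hn)
    have h9 : 0 ≤ c * Real.exp (-β * t) := by positivity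
    linarith

lemma zdef (h : RS p τ Z z α β A K) : z = fun t => Z t - ∑ j, p j * Z (t - τ j) := by
  funext t
  have := h.eq t
  linarith

lemma zm (h : RS p τ Z z α β A K) : Measurable z := by
  rw [h.zdef]
  have := h.Zm
  fun_prop

lemma ZintIic (h : RS p τ Z z α β A K) (t : ℝ) : IntegrableOn Z (Set.Iic t) := by
  refine Integrable.mono' ((integrableOn_exp_mul_Iic h.hα t).const_mul A)
    h.Zm.aestronglyMeasurable ?_
  refine Eventually.of_forall fun x => ?_
  rw [Real.norm_eq_abs, abs_of_nonneg (h.Z0 x)]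
  exact h.ZA x

lemma ZsintIic (h : RS p τ Z z α β A K) (j : Fin J) (t : ℝ) :
    IntegrableOn (fun s => Z (s - τ j)) (Set.Iic t) := by
  refine Integrable.mono' ((integrableOn_exp_mul_Iic h.hα t).const_mul A)
    (h.Zm.comp (measurable_id.sub_const _)).aestronglyMeasurable ?_
  refine Eventually.of_forall fun x => ?_
  rw [Real.norm_eq_abs, abs_of_nonneg (h.Z0 _)]
  refine (h.ZA _).trans ?_
  apply mul_le_mul_of_nonneg_left _ h.A0
  apply Real.exp_le_exp.2
  have := mul_pos h.hα (h.hτ j)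
  nlinarith

lemma zint (h : RS p τ Z z α β A K) : Integrable z := by
  rw [← integrableOn_univ, ← Set.Iic_union_Ioi (a := (0 : ℝ)), integrableOn_union]
  constructor
  · rw [h.zdef]
    refine (h.ZintIic 0).sub (integrable_finsetSum _ fun j _ => ?_)
    exact (h.ZsintIic j 0).const_mul _
  · refine Integrable.mono' ((integrableOn_exp_mul_Ioi (neg_lt_zero.2 h.hβ) 0).const_mul K)
      h.zm.aestronglyMeasurable ?_
    exact Eventually.of_forall fun x => h.zK x

/-- The integral of `Z` up to `t`. -/
noncomputable def W (Z : ℝ → ℝ) (t : ℝ) : ℝ := ∫ s in Set.Iic t, Z s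

lemma W_shift (τ t : ℝ) : ∫ s in Set.Iic t, Z (s - τ) = W Z (t - τ) := by
  have := (measurePreserving_sub_right volume τ).setIntegral_preimage_emb
    (Homeomorph.subRight τ).measurableEmbedding Z (Set.Iic (t - τ))
  rw [W, ← this]
  congr 2
  ext x; simp

lemma W_eq (h : RS p τ Z z α β A K) (t : ℝ) :
    ∑ j, p j * (W Z t - W Z (t - τ j)) = ∫ s in Set.Iic t, z s := by
  have e : ∫ s in Set.Iic t, z s = W Z t - ∑ j, p j * W Z (t - τ j) := by
    rw [h.zdef, integral_sub (h.ZintIic t)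
      (integrable_finsetSum _ fun j _ => (h.ZsintIic j t).const_mul _),
      integral_finsetSum _ (fun j _ => (h.ZsintIic j t).const_mul _)]
    congr 1
    apply Finset.sum_congr rfl
    intro j _
    rw [integral_const_mul, W_shift]
  rw [e]
  simp_rw [mul_sub]
  rw [Finset.sum_sub_distrib, ← Finset.sum_mul, h.hsum, one_mul]

lemma H_tendsto (h : RS p τ Z z α β A K) :
    Tendsto (fun t => ∑ j, p j * (W Z t - W Z (t - τ j))) atTop (nhds (∫ s, z s)) := by
  simp_rw [h.W_eq]
  have := (aecover_Iic (μ := (volume : Measure ℝ)) tendsto_id).integral_tendsto_of_countably_generated h.zint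
  simpa using this

lemma W_sub (h : RS p τ Z z α β A K) (a b : ℝ) : W Z b - W Z a = ∫ s in a..b, Z s := 
  intervalIntegral.integral_Iic_sub_Iic (h.ZintIic a) (h.ZintIic b)

lemma Zii (h : RS p τ Z z α β A K) (a b : ℝ) : IntervalIntegrable Z volume a b := by
  rw [intervalIntegrable_iff]
  exact (h.ZintIic (max a b)).mono_set fun x hx => hx.2

lemma W_sub_le (h : RS p τ Z z α β A K) {a b M : ℝ} (hab : a ≤ b)
    (hM : ∀ s ∈ Set.Icc a b, Z s ≤ M) : W Z b - W Z a ≤ M * (b - a) := by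
  rw [h.W_sub]
  have := intervalIntegral.integral_mono_on hab (h.Zii a b) (intervalIntegrable_const (c := M)) hM
  simp at this
  linarith

lemma le_W_sub (h : RS p τ Z z α β A K) {a b M : ℝ} (hab : a ≤ b)
    (hM : ∀ s ∈ Set.Icc a b, M ≤ Z s) : M * (b - a) ≤ W Z b - W Z a := by
  rw [h.W_sub]
  have := intervalIntegral.integral_mono_on hab (intervalIntegrable_const (c := M)) (h.Zii a b) hM
  simp at this
  linarith

end RS

lemma cesaro_int (f : ℝ → ℝ) (hf : Measurable f) (B c : ℝ) (hB : ∀ t, 0 < t → |f t| ≤ B)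
    (hc : Tendsto f atTop (nhds c)) :
    Tendsto (fun T : ℝ => (1 / T) * ∫ t in (0 : ℝ)..T, f t) atTop (nhds c) := by
  have h1 : Tendsto (fun T : ℝ => ∫ u in (0 : ℝ)..1, f (T * u)) atTop
      (nhds (∫ u in (0 : ℝ)..1, c)) := by
    apply intervalIntegral.tendsto_integral_filter_of_dominated_convergence (fun _ => B)
    · exact Eventually.of_forall fun T => (hf.comp (measurable_const_mul T)).aestronglyMeasurable
    · filter_upwards [eventually_gt_atTop 0] with T hT
      refine Eventually.of_forall fun u hu => ?_
      rw [Set.uIoc_of_le zero_le_one] at hu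
      exact hB _ (mul_pos hT hu.1)
    · exact intervalIntegrable_const
    · refine Eventually.of_forall fun u hu => ?_
      rw [Set.uIoc_of_le zero_le_one] at hu
      exact hc.comp (tendsto_id.atTop_mul_const hu.1)
  simp only [intervalIntegral.integral_const, sub_zero, one_smul] at h1
  refine h1.congr' ?_
  filter_upwards [eventually_gt_atTop 0] with T hT
  rw [intervalIntegral.integral_comp_mul_left (fun x => f x) hT.ne']
  simp

/-- asymptotic density of the semigroup. -/
lemma semigroup_dense {J : ℕ} (τ : Fin J → ℝ) (hτ : ∀ j, 0 < τ j)
    (hd : Dense ((AddSubgroup.closure (Set.range τ) : AddSubgroup ℝ) : Set ℝ)) (η : ℝ) (hη : 0 < η) :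
    ∃ S, ∀ s, S ≤ s → ∃ σ ∈ AddSubmonoid.closure (Set.range τ), σ ≤ s ∧ s ≤ σ + η := by
  set Sg := AddSubmonoid.closure (Set.range τ) with hS
  have hpos : ∀ x ∈ Sg, 0 ≤ x := by
    intro x hx
    induction hx using AddSubmonoid.closure_induction with
    | mem x hx => obtain ⟨j, rfl⟩ := hx; exact (hτ j).le
    | zero => exact le_rfl
    | add x y _ _ h1 h2 => exact add_nonneg h1 h2
  have hdiff : ∀ x ∈ AddSubgroup.closure (Set.range τ), ∃ a ∈ Sg, ∃ b ∈ Sg, x = a - b := by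
    intro x hx
    induction hx using AddSubgroup.closure_induction with
    | mem x hx => exact ⟨x, AddSubmonoid.subset_closure hx, 0, zero_mem _, by simp⟩
    | zero => exact ⟨0, zero_mem _, 0, zero_mem _, by simp⟩
    | add x y _ _ h1 h2 =>
      obtain ⟨a, ha, b, hb, rfl⟩ := h1
      obtain ⟨a', ha', b', hb', rfl⟩ := h2
      exact ⟨a + a', add_mem ha ha', b + b', add_mem hb hb', by ring⟩
    | neg x _ h1 =>
      obtain ⟨a, ha, b, hb, rfl⟩ := h1
      exact ⟨b, hb, a, ha, by ring⟩
  obtain ⟨x, hxm, hx⟩ := hd.exists_mem_open isOpen_Ioo (Set.nonempty_Ioo.2 hη)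
  obtain ⟨a, ha, b, hb, hab⟩ := hdiff x hxm
  have hx0 := hx.1
  have ha0 : 0 < a := by linarith [hpos b hb]
  -- shift so that b is positive
  set b' := b + a with hb'
  set a' := a + a with ha'
  have hb'm : b' ∈ Sg := add_mem hb ha
  have ha'm : a' ∈ Sg := add_mem ha ha
  have hb'0 : 0 < b' := by linarith [hpos b hb]
  have hab' : x = a' - b' := by rw [ha', hb', hab]; ring
  obtain ⟨N, hN⟩ := exists_nat_ge (b' / x)
  rw [div_le_iff₀ hx0] at hN
  refine ⟨N * b', fun s hs => ?_⟩
  have hs0 : 0 ≤ s / b' := div_nonneg (le_trans (by positivity) hs) hb'0.le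
  set n := ⌊s / b'⌋₊ with hn
  have hn1 : n * b' ≤ s := by
    have := Nat.floor_le hs0
    rwa [le_div_iff₀ hb'0] at this
  have hn2 : s < (n + 1) * b' := by
    have := Nat.lt_floor_add_one (s / b')
    rwa [div_lt_iff₀ hb'0] at this
  have hnN : N ≤ n := by
    apply Nat.le_floor
    rwa [le_div_iff₀ hb'0]
  have hk0 : 0 ≤ (s - n * b') / x := div_nonneg (by linarith) hx0.le
  set k := ⌊(s - n * b') / x⌋₊ with hk
  have hk1 : k * x ≤ s - n * b' := by
    have := Nat.floor_le hk0
    rwa [le_div_iff₀ hx0] at this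
  have hk2 : s - n * b' < (k + 1) * x := by
    have := Nat.lt_floor_add_one ((s - n * b') / x)
    rwa [div_lt_iff₀ hx0] at this
  have hkn : k ≤ n := by
    refine le_trans ?_ hnN
    have : (k : ℝ) * x < N * x := by linarith
    exact_mod_cast (lt_of_mul_lt_mul_right this hx0.le).le
  refine ⟨(n - k : ℕ) • b' + k • a', add_mem (nsmul_mem hb'm _) (nsmul_mem ha'm _), ?_, ?_⟩
  · simp only [nsmul_eq_mul, Nat.cast_sub hkn]
    have : ((n : ℝ) - k) * b' + k * a' = n * b' + k * x := by rw [hab']; ring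
    linarith
  · simp only [nsmul_eq_mul, Nat.cast_sub hkn]
    have : ((n : ℝ) - k) * b' + k * a' = n * b' + k * x := by rw [hab']; ring
    have := hx.2
    linarith

/-- propagation of extremal values along the semigroup -/
lemma propagate {J : ℕ} (p τ : Fin J → ℝ) (hp : ∀ j, 0 < p j) (hsum : ∑ j, p j = 1)
    (Y y : ℝ → ℝ) (heq : ∀ t, Y t = ∑ j, p j * Y (t - τ j) + y t)
    (hy : Tendsto y atTop (nhds 0)) (L : ℝ) (hL : ∀ δ > 0, ∀ᶠ t in atTop, Y t ≤ L + δ)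
    (U : Filter ℝ) (hU : U ≤ atTop) (hUL : Tendsto Y U (nhds L)) :
    ∀ σ ∈ AddSubmonoid.closure (Set.range τ), Tendsto (fun t => Y (t - σ)) U (nhds L) := by
  have hsh : ∀ σ : ℝ, Tendsto (fun t : ℝ => t - σ) U atTop := fun σ =>
    (tendsto_atTop_add_const_right atTop (-σ) tendsto_id).mono_left hU
  have step : ∀ σ : ℝ, Tendsto (fun t => Y (t - σ)) U (nhds L) → ∀ j,
      Tendsto (fun t => Y (t - (σ + τ j))) U (nhds L) := by
    intro σ hσ j
    rw [Metric.tendsto_nhds]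
    intro ε hε
    have hpj := hp j
    have hpj1 : p j ≤ 1 := by
      rw [← hsum]
      exact Finset.single_le_sum (fun i _ => (hp i).le) (Finset.mem_univ j)
    set δ := p j * ε / 4 with hδ
    have hδ0 : 0 < δ := by positivity
    have hδε : δ < ε := by
      rw [hδ]; nlinarith
    have e1 : ∀ᶠ t in U, ∀ i, Y (t - (σ + τ i)) ≤ L + δ := by
      rw [eventually_all]
      intro i
      exact (hsh (σ + τ i)).eventually (hL δ hδ0)
    have e2 : ∀ᶠ t in U, |Y (t - σ) - L| < δ := (Metric.tendsto_nhds.1 hσ) δ hδ0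
    have e3 : ∀ᶠ t in U, |y (t - σ)| < δ := by
      have := (Metric.tendsto_nhds.1 (hy.comp (hsh σ))) δ hδ0
      simpa [Real.dist_eq] using this
    filter_upwards [e1, e2, e3] with t h1 h2 h3
    have h4 := heq (t - σ)
    simp_rw [sub_sub] at h4
    rw [← Finset.add_sum_erase _ _ (Finset.mem_univ j)] at h4
    have h5 : ∑ i ∈ Finset.univ.erase j, p i * Y (t - (σ + τ i)) ≤
        ∑ i ∈ Finset.univ.erase j, p i * (L + δ) :=
      Finset.sum_le_sum fun i _ => mul_le_mul_of_nonneg_left (h1 i) (hp i).le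
    have h6 : ∑ i ∈ Finset.univ.erase j, p i = 1 - p j := by
      rw [← hsum, ← Finset.add_sum_erase _ _ (Finset.mem_univ j)]; ring
    rw [← Finset.sum_mul, h6] at h5
    rw [abs_lt] at h2 h3
    have h7 := h1 j
    have h8 : p j * (L - ε) < p j * Y (t - (σ + τ j)) := by
      have : p j * ε = 4 * δ := by rw [hδ]; ring
      have h9 : 0 < p j * δ := by positivity
      nlinarith
    have h10 := lt_of_mul_lt_mul_left h8 hpj.le
    rw [Real.dist_eq, abs_lt]
    constructor <;> linarith
  intro σ hσ
  induction hσ using AddSubmonoid.closure_induction_right with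
  | zero => simpa using hUL
  | add_right x _ w hw ih =>
    obtain ⟨j, rfl⟩ := hw
    exact step x ih j

namespace RS
variable {J : ℕ} {p τ : Fin J → ℝ} {Z z : ℝ → ℝ} {α β A K : ℝ}

lemma z_tendsto (h : RS p τ Z z α β A K) : Tendsto z atTop (nhds 0) := by
  apply squeeze_zero_norm h.zK
  have : Tendsto (fun t : ℝ => Real.exp (-β * t)) atTop (nhds 0) :=
    Real.tendsto_exp_atBot.comp (tendsto_id.const_mul_atTop_of_neg (neg_lt_zero.2 h.hβ))
  simpa using this.const_mul K

lemma mu_pos (h : RS p τ Z z α β A K) : 0 < ∑ j, p j * τ j := by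
  apply Finset.sum_pos (fun j _ => mul_pos (h.hp j) (h.hτ j))
  by_contra hc
  have h1 := h.hsum
  rw [Finset.not_nonempty_iff_eq_empty.1 hc] at h1
  simp at h1

lemma upper (h : RS p τ Z z α β A K)
    (hd : Dense ((AddSubgroup.closure (Set.range τ) : AddSubgroup ℝ) : Set ℝ))
    (L : ℝ) (hL0 : 0 ≤ L) (hL : ∀ δ > 0, ∀ᶠ t in atTop, Z t ≤ L + δ)
    (U : Filter ℝ) [NeBot U] (hU : U ≤ atTop) (hUL : Tendsto Z U (nhds L)) :
    L * ∑ j, p j * τ j ≤ ∫ s, z s := by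
  have hprop := propagate p τ h.hp h.hsum Z z h.eq h.z_tendsto L hL U hU hUL
  obtain ⟨M, hM, hmax⟩ := h.exists_max
  have main : ∀ η > 0, (Real.exp (-(α * (2 * η))) * (L - η)) * ∑ j, p j * τ j ≤ ∫ s, z s := by
    intro η hη
    obtain ⟨S, hS⟩ := semigroup_dense τ h.hτ hd η hη
    choose! σ hσ1 hσ2 hσ3 using hS
    obtain ⟨N, hN⟩ := exists_nat_ge (M / η)
    rw [div_le_iff₀ hη] at hN
    have e1 : ∀ᶠ t in U, ∀ i ∈ Finset.range (N + 1), L - η ≤ Z (t - σ (S + i * η)) := by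
      rw [Filter.eventually_all_finset]
      intro i _
      have hm := hσ1 (S + i * η) (by nlinarith [mul_nonneg (Nat.cast_nonneg (α := ℝ) i) hη.le])
      exact (hprop _ hm).eventually (eventually_ge_nhds (by linarith))
    have hH : Tendsto (fun t => ∑ j, p j * (W Z (t - S) - W Z (t - S - τ j))) U
        (nhds (∫ s, z s)) :=
      h.H_tendsto.comp ((tendsto_atTop_add_const_right atTop (-S) tendsto_id).mono_left hU)
    refine ge_of_tendsto hH ?_
    filter_upwards [e1] with t ht
    have low : ∀ s ∈ Set.Icc (t - S - M) (t - S), Real.exp (-(α * (2 * η))) * (L - η) ≤ Z s := by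
      intro s hs
      have h0 : 0 ≤ (t - S - s) / η := div_nonneg (by linarith [hs.2]) hη.le
      set i := ⌊(t - S - s) / η⌋₊ with hi
      have hi1 : i * η ≤ t - S - s := by
        have := Nat.floor_le h0
        rwa [le_div_iff₀ hη] at this
      have hi2 : t - S - s < (i + 1) * η := by
        have := Nat.lt_floor_add_one ((t - S - s) / η)
        rwa [div_lt_iff₀ hη] at this
      have hiN : i ≤ N := by
        have : (i : ℝ) * η ≤ N * η := by linarith [hs.1]
        exact_mod_cast le_of_mul_le_mul_right this hη
      have h1 := ht i (Finset.mem_range.2 (by omega))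
      have hge : S ≤ S + i * η := by
        nlinarith [mul_nonneg (Nat.cast_nonneg (α := ℝ) i) hη.le]
      have h2 := hσ2 _ hge
      have h3 := hσ3 _ hge
      set w := σ (S + i * η) with hw
      have h4 := h.slow s (t - w - s) (by linarith)
      rw [add_sub_cancel] at h4
      have h5 : Real.exp (α * (t - w - s)) ≤ Real.exp (α * (2 * η)) := by
        apply Real.exp_le_exp.2
        apply mul_le_mul_of_nonneg_left _ h.hα.le
        nlinarith
      have h6 := mul_le_mul_of_nonneg_right h5 (h.Z0 s)
      rw [Real.exp_neg, inv_mul_le_iff₀ (Real.exp_pos _)]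
      linarith
    rw [Finset.mul_sum]
    apply Finset.sum_le_sum
    intro j _
    have := h.le_W_sub (a := t - S - τ j) (b := t - S)
      (M := Real.exp (-(α * (2 * η))) * (L - η)) (by linarith [h.hτ j])
      (fun s hs => low s ⟨by linarith [hs.1, hmax j], hs.2⟩)
    have := mul_le_mul_of_nonneg_left this (h.hp j).le
    nlinarith
  have lim : Tendsto (fun η : ℝ => (Real.exp (-(α * (2 * η))) * (L - η)) * ∑ j, p j * τ j)
      (nhdsWithin 0 (Set.Ioi 0)) (nhds ((Real.exp (-(α * (2 * 0))) * (L - 0)) * ∑ j, p j * τ j)) := by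
    apply Tendsto.mono_left _ nhdsWithin_le_nhds
    apply Continuous.tendsto
    fun_prop
  simp only [mul_zero, neg_zero, Real.exp_zero, one_mul, sub_zero] at lim
  refine le_of_tendsto lim ?_
  filter_upwards [self_mem_nhdsWithin] with η hη using main η hη

lemma lower (h : RS p τ Z z α β A K)
    (hd : Dense ((AddSubgroup.closure (Set.range τ) : AddSubgroup ℝ) : Set ℝ))
    (L : ℝ) (hL0 : 0 ≤ L) (hL : ∀ δ > 0, ∀ᶠ t in atTop, L - δ ≤ Z t)
    (U : Filter ℝ) [NeBot U] (hU : U ≤ atTop) (hUL : Tendsto Z U (nhds L)) :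
    ∫ s, z s ≤ L * ∑ j, p j * τ j := by
  have hprop := propagate p τ h.hp h.hsum (fun t => - Z t) (fun t => - z t)
    (fun t => by
      show - Z t = _
      rw [h.eq t]
      simp only [mul_neg, Finset.sum_neg_distrib]
      ring) (by simpa using h.z_tendsto.neg) (-L)
      (fun δ hδ => by
        filter_upwards [hL δ hδ] with t ht
        linarith) U hU hUL.neg
  obtain ⟨M, hM, hmax⟩ := h.exists_max
  have main : ∀ η > 0, ∫ s, z s ≤ (Real.exp (α * (2 * η)) * (L + η)) * ∑ j, p j * τ j := by
    intro η hη
    obtain ⟨S, hS⟩ := semigroup_dense τ h.hτ hd η hη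
    choose! σ hσ1 hσ2 hσ3 using hS
    obtain ⟨N, hN⟩ := exists_nat_ge (M / η)
    rw [div_le_iff₀ hη] at hN
    have hge : ∀ i : ℕ, S ≤ S + (i + 2) * η := by
      intro i
      nlinarith [mul_nonneg (Nat.cast_nonneg (α := ℝ) i) hη.le]
    have e1 : ∀ᶠ t in U, ∀ i ∈ Finset.range (N + 1), Z (t - σ (S + (i + 2) * η)) ≤ L + η := by
      rw [Filter.eventually_all_finset]
      intro i _
      have hm := hσ1 (S + (i + 2) * η) (hge i)
      have := (hprop _ hm).neg
      simp only [neg_neg] at this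
      exact this.eventually (eventually_le_nhds (by linarith))
    have hH : Tendsto (fun t => ∑ j, p j * (W Z (t - S) - W Z (t - S - τ j))) U
        (nhds (∫ s, z s)) :=
      h.H_tendsto.comp ((tendsto_atTop_add_const_right atTop (-S) tendsto_id).mono_left hU)
    refine le_of_tendsto hH ?_
    filter_upwards [e1] with t ht
    have low : ∀ s ∈ Set.Icc (t - S - M) (t - S), Z s ≤ Real.exp (α * (2 * η)) * (L + η) := by
      intro s hs
      have h0 : 0 ≤ (t - S - s) / η := div_nonneg (by linarith [hs.2]) hη.le
      set i := ⌊(t - S - s) / η⌋₊ with hi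
      have hi1 : i * η ≤ t - S - s := by
        have := Nat.floor_le h0
        rwa [le_div_iff₀ hη] at this
      have hi2 : t - S - s < (i + 1) * η := by
        have := Nat.lt_floor_add_one ((t - S - s) / η)
        rwa [div_lt_iff₀ hη] at this
      have hiN : i ≤ N := by
        have : (i : ℝ) * η ≤ N * η := by linarith [hs.1]
        exact_mod_cast le_of_mul_le_mul_right this hη
      have h1 := ht i (Finset.mem_range.2 (by omega))
      have h2 := hσ2 _ (hge i)
      have h3 := hσ3 _ (hge i)
      set w := σ (S + (i + 2) * η) with hw
      have h4 := h.slow (t - w) (s - (t - w)) (by linarith)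
      rw [add_sub_cancel] at h4
      have h5 : Real.exp (α * (s - (t - w))) ≤ Real.exp (α * (2 * η)) := by
        apply Real.exp_le_exp.2
        apply mul_le_mul_of_nonneg_left _ h.hα.le
        nlinarith
      calc Z s ≤ _ := h4
        _ ≤ Real.exp (α * (2 * η)) * Z (t - w) := mul_le_mul_of_nonneg_right h5 (h.Z0 _)
        _ ≤ _ := mul_le_mul_of_nonneg_left h1 (Real.exp_pos _).le
    rw [Finset.mul_sum]
    apply Finset.sum_le_sum
    intro j _
    have := h.W_sub_le (a := t - S - τ j) (b := t - S)
      (M := Real.exp (α * (2 * η)) * (L + η)) (by linarith [h.hτ j])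
      (fun s hs => low s ⟨by linarith [hs.1, hmax j], hs.2⟩)
    have := mul_le_mul_of_nonneg_left this (h.hp j).le
    nlinarith
  have lim : Tendsto (fun η : ℝ => (Real.exp (α * (2 * η)) * (L + η)) * ∑ j, p j * τ j)
      (nhdsWithin 0 (Set.Ioi 0)) (nhds ((Real.exp (α * (2 * 0)) * (L + 0)) * ∑ j, p j * τ j)) := by
    apply Tendsto.mono_left _ nhdsWithin_le_nhds
    apply Continuous.tendsto
    fun_prop
  simp only [mul_zero, Real.exp_zero, one_mul, add_zero] at lim
  refine ge_of_tendsto lim ?_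
  filter_upwards [self_mem_nhdsWithin] with η hη using main η hη

theorem nonlattice (h : RS p τ Z z α β A K)
    (hd : Dense ((AddSubgroup.closure (Set.range τ) : AddSubgroup ℝ) : Set ℝ)) :
    Tendsto Z atTop (nhds ((∫ s, z s) / ∑ j, p j * τ j)) := by
  obtain ⟨B, hB0, hB⟩ := h.bdd
  have hmu := h.mu_pos
  have b1 : IsBoundedUnder (· ≤ ·) atTop Z := isBoundedUnder_of ⟨B, hB⟩
  have b2 : IsBoundedUnder (· ≥ ·) atTop Z := isBoundedUnder_of ⟨0, h.Z0⟩
  have c1 := b1.isCoboundedUnder_ge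
  have c2 := b2.isCoboundedUnder_le
  have u1 : ∀ δ > 0, ∀ᶠ t in atTop, Z t ≤ limsup Z atTop + δ := fun δ hδ =>
    (eventually_lt_of_limsup_lt (b := limsup Z atTop + δ) (by linarith) b1).mono fun _ h => h.le
  have l1 : ∀ δ > 0, ∀ᶠ t in atTop, liminf Z atTop - δ ≤ Z t := fun δ hδ =>
    (eventually_lt_of_lt_liminf (b := liminf Z atTop - δ) (by linarith) b2).mono fun _ h => h.le
  have hl0 : 0 ≤ liminf Z atTop := le_liminf_of_le c1 (Eventually.of_forall h.Z0)
  have hlu : liminf Z atTop ≤ limsup Z atTop := liminf_le_limsup b1 b2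
  apply tendsto_of_le_liminf_of_limsup_le _ _ b1 b2
  · have : MapClusterPt (liminf Z atTop) atTop Z := by
      rw [mapClusterPt_iff_frequently]
      intro s hs
      obtain ⟨ε, hε, hs⟩ := Metric.mem_nhds_iff.1 hs
      have f1 := frequently_lt_of_liminf_lt c1 (b := liminf Z atTop + ε) (by linarith)
      refine (f1.and_eventually (l1 (ε / 2) (by linarith))).mono fun t ht => hs ?_
      rw [Metric.mem_ball, Real.dist_eq, abs_lt]
      constructor <;> linarith [ht.1, ht.2]
    obtain ⟨U, hU, hUL⟩ := mapClusterPt_iff_ultrafilter.1 this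
    have := h.lower hd _ hl0 l1 U hU hUL
    rwa [div_le_iff₀ hmu]
  · have : MapClusterPt (limsup Z atTop) atTop Z := by
      rw [mapClusterPt_iff_frequently]
      intro s hs
      obtain ⟨ε, hε, hs⟩ := Metric.mem_nhds_iff.1 hs
      have f1 := frequently_lt_of_lt_limsup c2 (b := limsup Z atTop - ε) (by linarith)
      refine (f1.and_eventually (u1 (ε / 2) (by linarith))).mono fun t ht => hs ?_
      rw [Metric.mem_ball, Real.dist_eq, abs_lt]
      constructor <;> linarith [ht.1, ht.2]
    obtain ⟨U, hU, hUL⟩ := mapClusterPt_iff_ultrafilter.1 this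
    have := h.upper hd _ (hl0.trans hlu) u1 U hU hUL
    rwa [le_div_iff₀ hmu]

lemma W_mono (h : RS p τ Z z α β A K) : Monotone (W Z) := by
  intro a b hab
  have := h.le_W_sub (M := 0) hab (fun s _ => h.Z0 s)
  linarith

theorem average (h : RS p τ Z z α β A K) :
    Tendsto (fun T : ℝ => (1 / T) * ∫ t in (0 : ℝ)..T, Z t) atTop
      (nhds ((∫ s, z s) / ∑ j, p j * τ j)) := by
  obtain ⟨B, hB0, hB⟩ := h.bdd
  have hmu := h.mu_pos
  set μ := ∑ j, p j * τ j with hμ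
  obtain ⟨M, hM, hmax⟩ := h.exists_max
  have hinc : ∀ t s, 0 ≤ s → W Z t - W Z (t - s) ≤ B * s := by
    intro t s hs
    have := h.W_sub_le (a := t - s) (b := t) (M := B) (by linarith) (fun s _ => hB s)
    linarith
  have hWm : Measurable (W Z) := h.W_mono.measurable
  have hWi : ∀ a b, IntervalIntegrable (W Z) volume a b := fun a b =>
    h.W_mono.intervalIntegrable
  have hWsi : ∀ c a b, IntervalIntegrable (fun t => W Z (t - c)) volume a b := fun c a b =>
    Monotone.intervalIntegrable (fun x y hxy => h.W_mono (by linarith))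
  have hces := cesaro_int (fun t => ∑ j, p j * (W Z t - W Z (t - τ j)))
    (by fun_prop) (B * μ) _ (by
      intro t _
      have n0 : ∀ j, 0 ≤ p j * (W Z t - W Z (t - τ j)) := fun j =>
        mul_nonneg (h.hp j).le (sub_nonneg.2 (h.W_mono (by linarith [h.hτ j])))
      rw [abs_of_nonneg (Finset.sum_nonneg fun j _ => n0 j), hμ, Finset.mul_sum]
      apply Finset.sum_le_sum
      intro j _
      have := mul_le_mul_of_nonneg_left (hinc t (τ j) (h.hτ j).le) (h.hp j).le
      nlinarith) h.H_tendsto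
  have e1 : ∀ T, ∫ t in (0 : ℝ)..T, ∑ j, p j * (W Z t - W Z (t - τ j)) =
      ∑ j, p j * ((∫ t in (T - τ j)..T, W Z t) - ∫ t in (-τ j)..0, W Z t) := by
    intro T
    rw [intervalIntegral.integral_finsetSum (fun j _ => ((hWi _ _).sub (hWsi _ _ _)).const_mul _)]
    apply Finset.sum_congr rfl
    intro j _
    rw [intervalIntegral.integral_const_mul, intervalIntegral.integral_sub (hWi _ _) (hWsi _ _ _),
      intervalIntegral.integral_comp_sub_right (fun x => W Z x)]
    congr 1
    rw [zero_sub]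
    have i1 := intervalIntegral.integral_add_adjacent_intervals (hWi (-τ j) 0) (hWi 0 T)
    have i2 := intervalIntegral.integral_add_adjacent_intervals (hWi (-τ j) (T - τ j)) (hWi (T - τ j) T)
    linarith
  set R : ℝ → ℝ := fun T => (∫ t in (0 : ℝ)..T, ∑ j, p j * (W Z t - W Z (t - τ j))) -
    μ * ∫ t in (0 : ℝ)..T, Z t with hR
  obtain ⟨C0, hC0⟩ : ∃ C0, ∀ T, |R T| ≤ C0 := by
    refine ⟨∑ j, p j * (B * τ j * τ j + |τ j * W Z 0| + |∫ t in (-τ j)..0, W Z t|), fun T => ?_⟩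
    have : R T = ∑ j, p j * (((∫ t in (T - τ j)..T, W Z t) - τ j * W Z T) + τ j * W Z 0
        - ∫ t in (-τ j)..0, W Z t) := by
      rw [hR]
      simp only
      rw [e1, ← h.W_sub, hμ, Finset.sum_mul, ← Finset.sum_sub_distrib]
      apply Finset.sum_congr rfl; intros; ring
    rw [this]
    refine (Finset.abs_sum_le_sum_abs _ _).trans (Finset.sum_le_sum fun j _ => ?_)
    rw [abs_mul, abs_of_pos (h.hp j)]
    apply mul_le_mul_of_nonneg_left _ (h.hp j).le
    have hτj := h.hτ j
    have u : (∫ t in (T - τ j)..T, W Z t) ≤ ∫ t in (T - τ j)..T, W Z T :=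
      intervalIntegral.integral_mono_on (by linarith) (hWi _ _) intervalIntegrable_const
        (fun x hx => h.W_mono hx.2)
    have l : (∫ t in (T - τ j)..T, (W Z T - B * τ j)) ≤ ∫ t in (T - τ j)..T, W Z t := by
      apply intervalIntegral.integral_mono_on (by linarith) intervalIntegrable_const (hWi _ _)
      intro x hx
      have h1 := h.W_mono hx.1
      have := hinc T (τ j) hτj.le
      linarith
    simp only [intervalIntegral.integral_const, smul_eq_mul, sub_sub_cancel] at u l
    have b1 : |(∫ t in (T - τ j)..T, W Z t) - τ j * W Z T| ≤ B * τ j * τ j := by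
      rw [abs_le]
      constructor
      · nlinarith
      · have : 0 ≤ B * τ j * τ j := by positivity
        linarith
    refine (abs_sub _ _).trans (add_le_add ((abs_add_le _ _).trans (add_le_add b1 le_rfl)) le_rfl)
  have hR0 : Tendsto (fun T : ℝ => (1 / T) * R T) atTop (nhds 0) := by
    apply squeeze_zero_norm' (a := fun T => (1 / T) * C0)
    · filter_upwards [eventually_gt_atTop 0] with T hT
      rw [Real.norm_eq_abs, abs_mul, abs_of_pos (by positivity : 0 < 1 / T)]
      exact mul_le_mul_of_nonneg_left (hC0 T) (by positivity)
    · have : Tendsto (fun T : ℝ => 1 / T) atTop (nhds 0) := by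
        simpa using tendsto_inv_atTop_zero (𝕜 := ℝ)
      simpa using this.mul_const C0
  have := (hces.sub hR0).div_const μ
  rw [sub_zero] at this
  refine this.congr fun T => ?_
  rw [hR]
  simp only
  field_simp
  ring

theorem lattice_sum (h : RS p τ Z z α β A K) (a : ℝ) (ha : 0 < a) (n : Fin J → ℕ)
    (hn : ∀ j, τ j = n j * a) (M : ℝ) (hM : Tendsto Z atTop (nhds M)) (t : ℝ) :
    Tendsto (fun N : ℕ => ∑ k ∈ Finset.range N, (z (t + (k + 1) * a) + z (t - k * a))) atTop
      (nhds (∑ j, p j * (n j * M))) := by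
  set S : ℝ → ℝ := fun t => ∑ j, p j * ∑ i ∈ Finset.range (n j), Z (t - i * a) with hS
  have hdiff : ∀ t, S t - S (t - a) = z t := by
    intro t
    rw [hS]
    simp only
    rw [← Finset.sum_sub_distrib]
    have : ∀ j, p j * ∑ i ∈ Finset.range (n j), Z (t - i * a)
        - p j * ∑ i ∈ Finset.range (n j), Z (t - a - i * a) = p j * Z t - p j * Z (t - τ j) := by
      intro j
      rw [← mul_sub, ← mul_sub, ← Finset.sum_sub_distrib]
      congr 1
      have := Finset.sum_range_sub' (fun i : ℕ => Z (t - i * a)) (n j)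
      rw [hn j]
      simp only [Nat.cast_zero, zero_mul, sub_zero] at this
      rw [← this]
      apply Finset.sum_congr rfl
      intro i _
      push_cast
      congr 2
      ring
    rw [Finset.sum_congr rfl fun j _ => this j, Finset.sum_sub_distrib, ← Finset.sum_mul, h.hsum,
      one_mul]
    linarith [h.eq t]
  have e : ∀ N : ℕ, ∑ k ∈ Finset.range N, (z (t + (k + 1) * a) + z (t - k * a)) =
      S (t + N * a) - S (t - N * a) := by
    intro N
    rw [Finset.sum_add_distrib]
    have s1 := Finset.sum_range_sub (fun i : ℕ => S (t + i * a)) N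
    have s2 := Finset.sum_range_sub' (fun i : ℕ => S (t - i * a)) N
    simp only [Nat.cast_zero, zero_mul, sub_zero, add_zero] at s1 s2
    have t1 : ∑ k ∈ Finset.range N, z (t + (k + 1) * a) = S (t + N * a) - S t := by
      rw [← s1]
      apply Finset.sum_congr rfl
      intro i _
      rw [← hdiff]; push_cast; congr 2; ring
    have t2 : ∑ k ∈ Finset.range N, z (t - k * a) = S t - S (t - N * a) := by
      rw [← s2]
      apply Finset.sum_congr rfl
      intro i _
      rw [← hdiff]; push_cast; congr 2; ring
    rw [t1, t2]; ring
  simp_rw [e]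
  have hbot : Tendsto Z atBot (nhds 0) := by
    apply squeeze_zero h.Z0 h.ZA
    have : Tendsto (fun t : ℝ => Real.exp (α * t)) atBot (nhds 0) :=
      Real.tendsto_exp_atBot.comp (tendsto_id.const_mul_atBot h.hα)
    simpa using this.const_mul A
  have hNa : Tendsto (fun N : ℕ => (N : ℝ) * a) atTop atTop :=
    tendsto_natCast_atTop_atTop.atTop_mul_const ha
  have l1 : Tendsto (fun N : ℕ => S (t + N * a)) atTop (nhds (∑ j, p j * (n j * M))) := by
    apply tendsto_finsetSum
    intro j _
    apply Tendsto.const_mul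
    have : (n j : ℝ) * M = ∑ i ∈ Finset.range (n j), M := by simp
    rw [this]
    apply tendsto_finsetSum
    intro i _
    apply hM.comp
    have := tendsto_atTop_add_const_left atTop (t - i * a) hNa
    refine this.congr fun N => by ring
  have l2 : Tendsto (fun N : ℕ => S (t - N * a)) atTop (nhds (∑ j : Fin J, p j * (n j * 0))) := by
    apply tendsto_finsetSum
    intro j _
    apply Tendsto.const_mul
    have : (n j : ℝ) * 0 = ∑ i ∈ Finset.range (n j), 0 := by simp
    rw [this]
    apply tendsto_finsetSum
    intro i _
    apply hbot.comp
    have := tendsto_atBot_add_const_left atTop (t - i * a) (tendsto_neg_atTop_atBot.comp hNa)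
    refine this.congr fun N => by simp; ring
  have := l1.sub l2
  simpa using this

end RS

lemma poly_rpow (n : ℕ) : ∀ (c : ℕ → ℝ) (M D u w : ℝ), (∀ k : ℕ, D ≠ k) → 0 < u → u < w →
    (∀ x ∈ Set.Ioo u w, ∑ m ∈ Finset.range n, c m * x ^ m = M * x ^ D) → M = 0 := by
  induction n with
  | zero =>
    intro c M D u w hD hu huw hx
    have := hx ((u + w) / 2) ⟨by linarith, by linarith⟩
    simp only [Finset.range_zero, Finset.sum_empty] at this
    rcases mul_eq_zero.1 this.symm with h | h
    · exact h
    · exact absurd h (Real.rpow_pos_of_pos (by linarith) _).ne'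
  | succ n ih =>
    intro c M D u w hD hu huw hx
    have := ih (fun m => c (m + 1) * (m + 1)) (M * D) (D - 1) u w (fun k hk => hD (k + 1) (by
      push_cast; linarith)) hu huw (fun x hx' => by
        have hx0 : 0 < x := hu.trans hx'.1
        have d1 : HasDerivAt (fun x : ℝ => ∑ m ∈ Finset.range (n + 1), c m * x ^ m)
            (∑ m ∈ Finset.range (n + 1), c m * (m * x ^ (m - 1))) x := by
          apply HasDerivAt.fun_sum
          intro m _
          exact (hasDerivAt_pow m x).const_mul (c m)
        have d2 : HasDerivAt (fun x : ℝ => M * x ^ D) (M * (D * x ^ (D - 1))) x :=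
          (Real.hasDerivAt_rpow_const (Or.inl hx0.ne')).const_mul M
        have d3 := d2.congr_of_eventuallyEq (f₁ := fun x : ℝ => ∑ m ∈ Finset.range (n + 1), c m * x ^ m)
          (by
            filter_upwards [isOpen_Ioo.mem_nhds hx'] with y hy using hx y hy)
        have := d1.unique d3
        rw [Finset.sum_range_succ'] at this
        simp only [Nat.cast_zero, zero_mul, mul_zero, add_zero] at this
        rw [mul_assoc, ← this]
        apply Finset.sum_congr rfl
        intro m _
        push_cast
        ring)
    rcases mul_eq_zero.1 this with h | h
    · exact h
    · exact absurd h (by simpa using hD 0)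

section diphase
variable {d : ℕ} {D g : ℝ} {κ : ℕ → ℝ} {v : ℝ → ℝ}

lemma diphase_int (hg : 0 < g) (hD1 : (d : ℝ) - 1 < D) (hD2 : D < d)
    (h1 : ∀ t, -Real.log g < t → v t = ∑ m ∈ Finset.range d, κ m * Real.exp (((m : ℝ) - D) * t))
    (h2 : ∀ t, t ≤ -Real.log g → v t = -κ d * Real.exp (((d : ℝ) - D) * t)) :
    Integrable v ∧ ∫ t, v t =
      ∑ m ∈ Finset.range (d + 1), g ^ (D - (m : ℝ)) / (D - (m : ℝ)) * κ m := by
  have hm : ∀ m ∈ Finset.range d, (m : ℝ) - D < 0 := by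
    intro m hm
    have : (m : ℝ) + 1 ≤ d := by exact_mod_cast Finset.mem_range.1 hm
    linarith
  have hd0 : 0 < (d : ℝ) - D := by linarith
  have i1 : IntegrableOn v (Set.Iic (-Real.log g)) := by
    refine IntegrableOn.congr_fun ((integrableOn_exp_mul_Iic hd0 _).const_mul (-κ d))
      (fun t ht => (h2 t ht).symm) measurableSet_Iic
  have i2' : ∀ m ∈ Finset.range d, IntegrableOn (fun t => κ m * Real.exp (((m : ℝ) - D) * t))
      (Set.Ioi (-Real.log g)) := fun m hm' =>
    (integrableOn_exp_mul_Ioi (hm m hm') _).const_mul _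
  have i2 : IntegrableOn v (Set.Ioi (-Real.log g)) := by
    refine IntegrableOn.congr_fun (integrable_finsetSum _ i2')
      (fun t ht => (h1 t ht).symm) measurableSet_Ioi
  have hge : ∀ x : ℝ, Real.exp ((x - D) * -Real.log g) = g ^ (D - x) := by
    intro x
    rw [Real.rpow_def_of_pos hg]
    congr 1; ring
  refine ⟨?_, ?_⟩
  · rw [← integrableOn_univ, ← Set.Iic_union_Ioi (a := -Real.log g), integrableOn_union]
    exact ⟨i1, i2⟩
  · rw [← intervalIntegral.integral_Iic_add_Ioi i1 i2, setIntegral_congr_fun measurableSet_Iic h2,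
      setIntegral_congr_fun measurableSet_Ioi h1, integral_finsetSum _ i2', integral_const_mul,
      integral_exp_mul_Iic hd0, Finset.sum_range_succ, add_comm]
    congr 1
    · apply Finset.sum_congr rfl
      intro m hm'
      rw [integral_const_mul, integral_exp_mul_Ioi (hm m hm'), hge]
      have := (hm m hm')
      rw [neg_div, ← div_neg, neg_sub]
      ring
    · rw [hge, ← neg_sub D (d : ℝ), div_neg]
      ring

lemma diphase_bound (hg : 0 < g) (hD1 : (d : ℝ) - 1 < D) (hD2 : D < d)
    (h1 : ∀ t, -Real.log g < t → v t = ∑ m ∈ Finset.range d, κ m * Real.exp (((m : ℝ) - D) * t))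
    (h2 : ∀ t, t ≤ -Real.log g → v t = -κ d * Real.exp (((d : ℝ) - D) * t)) :
    ∃ K, ∀ t, |v t| ≤ K * Real.exp (-(D - d + 1) * t) := by
  refine ⟨(∑ m ∈ Finset.range d, |κ m| * Real.exp (((m : ℝ) - d + 1) * -Real.log g))
    + |κ d| * Real.exp (-Real.log g), fun t => ?_⟩
  have p1 : 0 ≤ ∑ m ∈ Finset.range d, |κ m| * Real.exp (((m : ℝ) - d + 1) * -Real.log g) :=
    Finset.sum_nonneg fun m _ => by positivity
  have p2 : 0 ≤ |κ d| * Real.exp (-Real.log g) := by positivity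
  rw [add_mul]
  rcases lt_or_ge (-Real.log g) t with ht | ht
  · have : |v t| ≤ (∑ m ∈ Finset.range d, |κ m| * Real.exp (((m : ℝ) - d + 1) * -Real.log g))
        * Real.exp (-(D - d + 1) * t) := by
      rw [h1 t ht, Finset.sum_mul]
      refine (Finset.abs_sum_le_sum_abs _ _).trans (Finset.sum_le_sum fun m hm => ?_)
      rw [abs_mul, abs_of_pos (Real.exp_pos _), mul_assoc, ← Real.exp_add]
      apply mul_le_mul_of_nonneg_left _ (abs_nonneg _)
      apply Real.exp_le_exp.2
      have : (m : ℝ) + 1 ≤ d := by exact_mod_cast Finset.mem_range.1 hm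
      nlinarith
    have := mul_nonneg p2 (Real.exp_pos (-(D - d + 1) * t)).le
    linarith
  · have : |v t| ≤ |κ d| * Real.exp (-Real.log g) * Real.exp (-(D - d + 1) * t) := by
      rw [h2 t ht, abs_mul, abs_neg, abs_of_pos (Real.exp_pos _), mul_assoc, ← Real.exp_add]
      apply mul_le_mul_of_nonneg_left _ (abs_nonneg _)
      apply Real.exp_le_exp.2
      nlinarith
    have := mul_nonneg p1 (Real.exp_pos (-(D - d + 1) * t)).le
    linarith

/-- coefficients -/
noncomputable def bco (d : ℕ) (D a : ℝ) (K : ℤ) (m : ℕ) (k : ℤ) : ℝ :=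
  if m < d then (if K ≤ k then Real.exp (((m : ℝ) - D) * (k * a)) else 0)
  else (if K ≤ k then 0 else - Real.exp (((m : ℝ) - D) * (k * a)))

lemma geo_summable (x : ℝ) (hx : x < 0) : Summable (fun k : ℕ => Real.exp (x * k)) := by
  have : (fun k : ℕ => Real.exp (x * k)) = fun k : ℕ => (Real.exp x) ^ k := by
    funext k; rw [← Real.exp_nat_mul]; ring_nf
  rw [this]
  exact summable_geometric_of_lt_one (Real.exp_pos _).le (by simpa using hx)

lemma bco_summable (hD1 : (d : ℝ) - 1 < D) (hD2 : D < d) (a : ℝ) (ha : 0 < a) (K : ℤ) (m : ℕ)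
    (hm : m ≤ d) :
    Summable (fun k : ℕ => bco d D a K m ((k : ℤ) + 1) + bco d D a K m (-(k : ℤ))) := by
  obtain ⟨N, hN⟩ := exists_nat_gt (|K|)
  have hK := abs_lt.1 hN
  rcases lt_or_eq_of_le hm with hlt | rfl
  · have hmD : (m : ℝ) - D < 0 := by
      have : (m : ℝ) + 1 ≤ d := by exact_mod_cast hlt
      linarith
    have hs := geo_summable (((m : ℝ) - D) * a) (mul_neg_of_neg_of_pos hmD ha)
    apply Summable.add
    · refine Summable.of_norm_bounded hs fun k => ?_
      rw [bco, if_pos hlt]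
      split_ifs
      · rw [Real.norm_eq_abs, abs_of_pos (Real.exp_pos _)]
        apply Real.exp_le_exp.2
        push_cast
        nlinarith
      · simp; positivity
    · refine summable_of_ne_finset_zero (s := Finset.range N) fun k hk => ?_
      have : N ≤ k := by simpa using hk
      rw [bco, if_pos hlt, if_neg (by omega)]
  · have hmD : 0 < (m : ℝ) - D := by linarith
    have hs := geo_summable (-((m : ℝ) - D) * a) (by nlinarith)
    apply Summable.add
    · refine summable_of_ne_finset_zero (s := Finset.range N) fun k hk => ?_
      have : N ≤ k := by simpa using hk
      rw [bco, if_neg (lt_irrefl _), if_pos (by omega)]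
    · refine Summable.of_norm_bounded hs fun k => ?_
      rw [bco, if_neg (lt_irrefl _)]
      split_ifs
      · simp; positivity
      · rw [norm_neg, Real.norm_eq_abs, abs_of_pos (Real.exp_pos _)]
        apply Real.exp_le_exp.2
        push_cast
        linarith

end diphase

lemma lattice_contra (d Q : ℕ) (D : ℝ) (g : Fin Q → ℝ) (κ : Fin Q → ℕ → ℝ) (v : Fin Q → ℝ → ℝ)
    (hD1 : (d : ℝ) - 1 < D) (hD2 : D < d)
    (h1 : ∀ q t, -Real.log (g q) < t →
      v q t = ∑ m ∈ Finset.range d, κ q m * Real.exp (((m : ℝ) - D) * t))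
    (h2 : ∀ q t, t ≤ -Real.log (g q) → v q t = -κ q d * Real.exp (((d : ℝ) - D) * t))
    (a : ℝ) (ha : 0 < a) (c : ℝ)
    (hlim : ∀ t : ℝ, Tendsto (fun N : ℕ => ∑ k ∈ Finset.range N,
      (∑ q, v q (t + (k + 1) * a) + ∑ q, v q (t - k * a))) atTop (nhds c)) : c = 0 := by
  set Kq : Fin Q → ℤ := fun q => ⌈(-Real.log (g q)) / a⌉ with hKq
  -- threshold
  have hthr : ∀ q, ∀ᶠ t in nhdsWithin (0 : ℝ) (Set.Ioi 0), ∀ k : ℤ,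
      (-Real.log (g q) < t + k * a ↔ Kq q ≤ k) := by
    intro q
    have hlt : ((Kq q : ℝ) - 1) * a < -Real.log (g q) := by
      have := Int.ceil_lt_add_one ((-Real.log (g q)) / a)
      rw [← lt_div_iff₀ ha]
      linarith
    have : ∀ᶠ t in nhdsWithin (0 : ℝ) (Set.Ioi 0), t < -Real.log (g q) - ((Kq q : ℝ) - 1) * a :=
      nhdsWithin_le_nhds (eventually_lt_nhds (by linarith))
    filter_upwards [this, self_mem_nhdsWithin] with t ht ht0 k
    have ht0 : 0 < t := ht0
    constructor
    · intro hk
      by_contra hc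
      have : k + 1 ≤ Kq q := by omega
      have : (k : ℝ) + 1 ≤ Kq q := by exact_mod_cast this
      nlinarith
    · intro hk
      have h3 : -Real.log (g q) / a ≤ k := (Int.le_ceil _).trans (by exact_mod_cast hk)
      rw [div_le_iff₀ ha] at h3
      linarith
  have hall := eventually_all.2 hthr
  obtain ⟨u, hu, hsub⟩ := (mem_nhdsGT_iff_exists_Ioo_subset).1 hall
  have hu : 0 < u := hu
  -- expansion
  set cf : ℕ → ℝ := fun m => ∑ q, κ q m * ∑' k : ℕ,
    (bco d D a (Kq q) m ((k : ℤ) + 1) + bco d D a (Kq q) m (-(k : ℤ))) with hcf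
  have hexp : ∀ t ∈ Set.Ioo 0 u, ∑ m ∈ Finset.range (d + 1), cf m * Real.exp (((m : ℝ) - D) * t)
      = c := by
    intro t ht
    have hthr' := hsub ht
    have hv : ∀ q (k : ℤ), v q (t + k * a) = ∑ m ∈ Finset.range (d + 1),
        κ q m * bco d D a (Kq q) m k * Real.exp (((m : ℝ) - D) * t) := by
      intro q k
      rw [Finset.sum_range_succ]
      by_cases hk : Kq q ≤ k
      · rw [h1 q _ ((hthr' q k).2 hk)]
        rw [bco, if_neg (lt_irrefl _), if_pos hk, mul_zero, zero_mul, add_zero]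
        apply Finset.sum_congr rfl
        intro m hm
        rw [bco, if_pos (Finset.mem_range.1 hm), if_pos hk, mul_assoc, ← Real.exp_add]
        ring_nf
      · rw [h2 q _ (not_lt.1 fun hc => hk ((hthr' q k).1 hc))]
        rw [Finset.sum_eq_zero, bco, if_neg (lt_irrefl _), if_neg hk, zero_add, mul_neg, neg_mul,
          neg_mul, mul_assoc, ← Real.exp_add]
        · ring_nf
        · intro m hm
          rw [bco, if_pos (Finset.mem_range.1 hm), if_neg hk, mul_zero, zero_mul]
    refine tendsto_nhds_unique ?_ (hlim t)
    have hlim2 : Tendsto (fun N : ℕ => ∑ m ∈ Finset.range (d + 1), (∑ q, κ q m *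
        ∑ k ∈ Finset.range N, (bco d D a (Kq q) m ((k : ℤ) + 1) + bco d D a (Kq q) m (-(k : ℤ))))
          * Real.exp (((m : ℝ) - D) * t)) atTop
        (nhds (∑ m ∈ Finset.range (d + 1), cf m * Real.exp (((m : ℝ) - D) * t))) := by
      apply tendsto_finsetSum
      intro m hm
      apply Tendsto.mul_const
      apply tendsto_finsetSum
      intro q _
      apply Tendsto.const_mul
      exact (bco_summable hD1 hD2 a ha (Kq q) m (by
        have := Finset.mem_range.1 hm; omega)).hasSum.tendsto_sum_nat
    refine hlim2.congr fun N => ?_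
    have : ∀ k : ℕ, (∑ q, v q (t + (k + 1) * a) + ∑ q, v q (t - k * a)) =
        ∑ m ∈ Finset.range (d + 1), ∑ q, κ q m * (bco d D a (Kq q) m ((k : ℤ) + 1)
          + bco d D a (Kq q) m (-(k : ℤ))) * Real.exp (((m : ℝ) - D) * t) := by
      intro k
      have e1 : ∀ q, v q (t + (k + 1) * a) = v q (t + ((k + 1 : ℤ) : ℝ) * a) := by
        intro q; push_cast; rfl
      have e2 : ∀ q, v q (t - k * a) = v q (t + ((-k : ℤ) : ℝ) * a) := by
        intro q; push_cast; ring_nf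
      simp_rw [e1, e2, hv]
      rw [Finset.sum_comm, Finset.sum_comm (s := Finset.univ), ← Finset.sum_add_distrib]
      apply Finset.sum_congr rfl
      intro m _
      rw [← Finset.sum_add_distrib]
      apply Finset.sum_congr rfl
      intro q _
      ring
    simp_rw [this]
    rw [Finset.sum_comm]
    apply Finset.sum_congr rfl
    intro m _
    rw [Finset.sum_comm, Finset.sum_mul]
    apply Finset.sum_congr rfl
    intro q _
    rw [Finset.mul_sum, Finset.sum_mul]
  refine poly_rpow (d + 1) cf c D 1 (Real.exp u) ?_ one_pos (by simpa using hu) ?_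
  · intro k hk
    rw [hk] at hD1 hD2
    have a1 : (d : ℝ) < k + 1 := by linarith
    have a2 : d < k + 1 := by exact_mod_cast a1
    have a3 : k < d := by exact_mod_cast hD2
    omega
  · intro x hx
    have hx0 : 0 < x := by linarith [hx.1]
    have := hexp (Real.log x) ⟨Real.log_pos hx.1, by rw [Real.log_lt_iff_lt_exp hx0]; exact hx.2⟩
    rw [← this, Finset.sum_mul]
    apply Finset.sum_congr rfl
    intro m _
    rw [mul_assoc, Real.rpow_def_of_pos hx0, ← Real.exp_add, ← Real.rpow_natCast x m,
      Real.rpow_def_of_pos hx0]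
    ring_nf

open scoped Pointwise in
lemma sim_homeo {d : ℕ} (φ : EuclideanSpace ℝ (Fin d) → EuclideanSpace ℝ (Fin d)) (r : ℝ)
    (hr : 0 < r) (hsim : ∀ x y, dist (φ x) (φ y) = r * dist x y) :
    ∃ h : EuclideanSpace ℝ (Fin d) ≃ₜ EuclideanSpace ℝ (Fin d), (⇑h = φ) ∧
      ∀ S : Set (EuclideanSpace ℝ (Fin d)), volume (φ '' S) = ENNReal.ofReal (r ^ d) * volume S := by
  have hψ : Isometry (fun x => r⁻¹ • φ x) := by
    apply Isometry.of_dist_eq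
    intro x y
    rw [dist_smul₀, hsim, Real.norm_eq_abs, abs_of_pos (inv_pos.2 hr)]
    field_simp
  set e := hψ.affineIsometryOfStrictConvexSpace.toAffineIsometryEquiv rfl with he
  have hev : ∀ x, e x = r⁻¹ • φ x := fun x => rfl
  have hφ : ∀ x, φ x = r • e x := fun x => by
    rw [hev, smul_smul, mul_inv_cancel₀ hr.ne', one_smul]
  refine ⟨e.toHomeomorph.trans (Homeomorph.smulOfNeZero r hr.ne'), ?_, ?_⟩
  · funext x
    rw [hφ]; rfl
  · intro S
    have h1 : φ '' S = r • (e '' S) := by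
      rw [← Set.image_smul, Set.image_image]
      exact Set.image_congr fun x _ => hφ x
    have h2 : volume (e '' S) = volume S := by
      have h3 : e '' S = (e 0) +ᵥ (e.linearIsometryEquiv '' S) := by
        rw [← Set.image_vadd, Set.image_image]
        apply Set.image_congr
        intro x _
        have := e.map_vadd 0 x
        simp only [vadd_eq_add, add_zero] at this ⊢
        rw [this, add_comm]
      rw [h3, measure_vadd]
      have h4 : e.linearIsometryEquiv '' S = e.linearIsometryEquiv.symm ⁻¹' S := by
        exact e.linearIsometryEquiv.toEquiv.image_eq_preimage_symm S
      rw [h4]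
      exact (e.linearIsometryEquiv.symm.measurePreserving).measure_preimage_emb
        e.linearIsometryEquiv.symm.toHomeomorph.measurableEmbedding S
    rw [h1, Measure.addHaar_smul, h2, finrank_euclideanSpace_fin, abs_of_pos (by positivity)]

section top
variable {E : Type*} [NormedAddCommGroup E] [NormedSpace ℝ E]

lemma cross (A : Set E) (x y : E) (hx : x ∈ A) (hy : y ∉ A) :
    ∃ w ∈ frontier A, dist x w ≤ dist x y := by
  have hp : IsPreconnected (segment ℝ x y) := (convex_segment x y).isPreconnected
  have : (segment ℝ x y ∩ frontier A).Nonempty := by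
    by_contra hc
    rw [Set.not_nonempty_iff_eq_empty] at hc
    have hcov : segment ℝ x y ⊆ interior A ∪ (closure A)ᶜ := by
      intro u hu
      by_contra hn
      rw [Set.mem_union, not_or, Set.notMem_compl_iff] at hn
      have : u ∈ segment ℝ x y ∩ frontier A := ⟨hu, hn.2, hn.1⟩
      rw [hc] at this
      exact this
    have hxA : x ∈ interior A := by
      rcases hcov (left_mem_segment ℝ x y) with h | h
      · exact h
      · exact absurd (subset_closure hx) h
    have hyA : y ∈ (closure A)ᶜ := by
      rcases hcov (right_mem_segment ℝ x y) with h | h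
      · exact absurd (interior_subset h) hy
      · exact h
    obtain ⟨u, hu, hu1, hu2⟩ := hp _ _ isOpen_interior isClosed_closure.isOpen_compl hcov
      ⟨x, left_mem_segment ℝ x y, hxA⟩ ⟨y, right_mem_segment ℝ x y, hyA⟩
    exact hu2 (subset_closure (interior_subset hu1))
  obtain ⟨w, hw, hwf⟩ := this
  refine ⟨w, hwf, ?_⟩
  have := dist_add_dist_of_mem_segment hw
  linarith [dist_nonneg (x := w) (y := y)]

lemma infDist_le_of (x : E) (A B : Set E) (hB : B.Nonempty)
    (h : ∀ y ∈ B, ∃ w ∈ A, dist x w ≤ dist x y) : Metric.infDist x A ≤ Metric.infDist x B := by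
  rw [Metric.le_infDist hB]
  intro y hy
  obtain ⟨w, hw, hd⟩ := h y hy
  exact (Metric.infDist_le_dist_of_mem hw).trans hd

lemma mem_cth (F : Set E) (hF : F.Nonempty) (ε : ℝ) (hε : 0 ≤ ε) (x : E) :
    x ∈ Metric.cthickening ε F ↔ Metric.infDist x F ≤ ε := by
  rw [Metric.mem_cthickening_iff, Metric.infDist, ENNReal.le_ofReal_iff_toReal_le
    (Metric.infEDist_ne_top hF) hε]

end top


lemma hull_closed {d : ℕ} (F C : Set (EuclideanSpace ℝ (Fin d))) (hC : C = convexHull ℝ F)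
    (hPWC : frontier C ⊆ F) : IsClosed C :=
  frontier_subset_iff_isClosed.1 (hPWC.trans (hC ▸ subset_convexHull ℝ F))

lemma hull_compact {d : ℕ} (F C : Set (EuclideanSpace ℝ (Fin d))) (hF : IsCompact F)
    (hC : C = convexHull ℝ F) (hPWC : frontier C ⊆ F) : IsCompact C :=
  Metric.isCompact_of_isClosed_isBounded (hull_closed F C hC hPWC)
    (hC ▸ isBounded_convexHull.2 hF.isBounded)

theorem geo_eq {d J Q : ℕ}
    (φ : Fin J → EuclideanSpace ℝ (Fin d) → EuclideanSpace ℝ (Fin d))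
    (r : Fin J → ℝ) (hr0 : ∀ j, 0 < r j)
    (hsim : ∀ j x y, dist (φ j x) (φ j y) = r j * dist x y)
    (F : Set (EuclideanSpace ℝ (Fin d)))
    (hFcpt : IsCompact F) (hFne : F.Nonempty)
    (hFinv : F = ⋃ j, φ j '' F)
    (C : Set (EuclideanSpace ℝ (Fin d))) (hC : C = convexHull ℝ F)
    (hdim : (interior C).Nonempty)
    (hTSC₁ : ∀ j, φ j '' interior C ⊆ interior C)
    (hTSC₂ : ∀ j k, j ≠ k → Disjoint (φ j '' interior C) (φ k '' interior C))
    (hPWC : frontier C ⊆ F)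
    (G : Fin Q → Set (EuclideanSpace ℝ (Fin d)))
    (hG : (⋃ q, G q) = C \ ⋃ j, φ j '' C)
    (hGopen : ∀ q, IsOpen (G q))
    (hGdisj : ∀ q q', q ≠ q' → Disjoint (G q) (G q')) :
    (∀ ε : ℝ, 0 < ε → volume (Metric.cthickening ε F ∩ C) =
      ∑ j, ENNReal.ofReal (r j ^ d) * volume (Metric.cthickening (ε / r j) F ∩ C) +
      ∑ q, volume (innerNbhd (G q) ε)) ∧
    volume C = ∑ j, ENNReal.ofReal (r j ^ d) * volume C + ∑ q, volume (G q) := by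
  have hh := fun j => sim_homeo (φ j) (r j) (hr0 j) (hsim j)
  choose h hhφ hvol using hh
  have hCcl : IsClosed C := hull_closed F C hC hPWC
  have hCconv : Convex ℝ C := hC ▸ convex_convexHull ℝ F
  have hFC : F ⊆ C := hC ▸ subset_convexHull ℝ F
  have hclint : closure (interior C) = C := by
    rw [hCconv.closure_interior_eq_closure_of_nonempty_interior hdim, hCcl.closure_eq]
  have himcl : ∀ j, closure (φ j '' interior C) = φ j '' C := by
    intro j
    rw [← hhφ, ← (h j).image_closure, hclint]
  have himint : ∀ j, interior (φ j '' C) = φ j '' interior C := by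
    intro j
    rw [← hhφ, ← (h j).image_interior]
  have himop : ∀ j, IsOpen (φ j '' interior C) := by
    intro j
    rw [← himint]; exact isOpen_interior
  have himclosed : ∀ j, IsClosed (φ j '' C) := by
    intro j
    rw [← himcl]; exact isClosed_closure
  have himfr : ∀ j, frontier (φ j '' C) = φ j '' frontier C := by
    intro j
    rw [← hhφ, ← (h j).image_frontier]
  have hFj : ∀ j, φ j '' F ⊆ F := by
    intro j
    conv_rhs => rw [hFinv]
    exact Set.subset_iUnion (fun j => φ j '' F) j
  have himC : ∀ j, φ j '' C ⊆ C := by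
    intro j
    rw [← himcl j]
    exact (closure_mono (hTSC₁ j)).trans hclint.le
  have hfrF : ∀ j, frontier (φ j '' C) ⊆ φ j '' F := by
    intro j
    rw [himfr]
    exact Set.image_mono hPWC
  have hdisj : ∀ j k, j ≠ k → Disjoint (φ j '' interior C) (φ k '' C) := by
    intro j k hjk
    rw [← himcl k]
    exact (hTSC₂ j k hjk).closure_right (himop j)
  have hnull : volume (frontier C) = 0 := hCconv.addHaar_frontier volume
  have hnullj : ∀ j, volume (frontier (φ j '' C)) = 0 := by
    intro j
    rw [himfr, hvol, hnull, mul_zero]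
  have hae : ∀ j k, j ≠ k → volume (φ j '' C ∩ φ k '' C) = 0 := by
    intro j k hjk
    refine measure_mono_null ?_ (hnullj j)
    rintro x ⟨hx1, hx2⟩
    rw [(himclosed j).frontier_eq, himint]
    exact ⟨hx1, fun hx => Set.disjoint_left.1 (hdisj j k hjk) hx hx2⟩
  have hGsub : ∀ q, G q ⊆ C \ ⋃ j, φ j '' C := by
    intro q
    rw [← hG]; exact Set.subset_iUnion G q
  have hGj : ∀ q j, Disjoint (G q) (φ j '' C) := by
    intro q j
    rw [Set.disjoint_left]
    intro x hx hx2
    exact (hGsub q hx).2 (Set.mem_iUnion.2 ⟨j, hx2⟩)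
  have hCdec : C = (⋃ j, φ j '' C) ∪ ⋃ q, G q := by
    rw [hG, Set.union_sdiff_cancel (Set.iUnion_subset himC)]
  have decomp : ∀ T : Set (EuclideanSpace ℝ (Fin d)), MeasurableSet T →
      volume (T ∩ C) = ∑ j, volume (T ∩ φ j '' C) + ∑ q, volume (T ∩ G q) := by
    intro T hT
    have e : T ∩ C = (⋃ j, T ∩ φ j '' C) ∪ ⋃ q, T ∩ G q := by
      rw [← Set.inter_iUnion, ← Set.inter_iUnion, ← Set.inter_union_distrib_left, ← hCdec]
    have hmG : MeasurableSet (⋃ q, T ∩ G q) :=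
      MeasurableSet.iUnion fun q => hT.inter (hGopen q).measurableSet
    rw [e, measure_union _ hmG]
    · congr 1
      · rw [measure_iUnion₀, tsum_fintype]
        · intro j k hjk
          refine measure_mono_null ?_ (hae j k hjk)
          rintro x ⟨hx1, hx2⟩
          exact ⟨hx1.2, hx2.2⟩
        · intro j
          exact (hT.inter (himclosed j).measurableSet).nullMeasurableSet
      · rw [measure_iUnion, tsum_fintype]
        · intro q q' hqq
          exact (hGdisj q q' hqq).mono Set.inter_subset_right Set.inter_subset_right
        · intro q
          exact hT.inter (hGopen q).measurableSet
    · rw [Set.disjoint_iUnion_left]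
      intro j
      rw [Set.disjoint_iUnion_right]
      intro q
      exact (hGj q j).symm.mono Set.inter_subset_right Set.inter_subset_right
  have hFcov : ∀ y ∈ F, ∃ k, y ∈ φ k '' F := by
    intro y hy
    rw [hFinv] at hy
    exact Set.mem_iUnion.1 hy
  -- distance on the pieces
  have dj : ∀ j, ∀ x ∈ φ j '' C, Metric.infDist x F = Metric.infDist x (φ j '' F) := by
    intro j x hx
    apply le_antisymm
    · exact Metric.infDist_le_infDist_of_subset (hFj j) (hFne.image _)
    · apply infDist_le_of _ _ _ hFne
      intro y hy
      obtain ⟨k, hk⟩ := hFcov y hy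
      by_cases hkj : k = j
      · subst hkj; exact ⟨y, hk, le_rfl⟩
      by_cases hyC : y ∈ φ j '' C
      · refine ⟨y, hfrF j ?_, le_rfl⟩
        rw [(himclosed j).frontier_eq, himint]
        exact ⟨hyC, fun hx => Set.disjoint_left.1 (hdisj j k (Ne.symm hkj)) hx
          (Set.image_mono hFC hk)⟩
      · obtain ⟨w, hw, hd⟩ := cross _ x y hx hyC
        exact ⟨w, hfrF j hw, hd⟩
  have dscale : ∀ j u, Metric.infDist (φ j u) (φ j '' F) = r j * Metric.infDist u F := by
    intro j u
    apply le_antisymm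
    · rw [← div_le_iff₀' (hr0 j), Metric.le_infDist hFne]
      intro y hy
      rw [div_le_iff₀' (hr0 j), ← hsim]
      exact Metric.infDist_le_dist_of_mem (Set.mem_image_of_mem _ hy)
    · rw [Metric.le_infDist (hFne.image _)]
      rintro _ ⟨y, hy, rfl⟩
      rw [hsim]
      exact mul_le_mul_of_nonneg_left (Metric.infDist_le_dist_of_mem hy) (hr0 j).le
  have piece : ∀ j ε, 0 < ε → Metric.cthickening ε F ∩ φ j '' C =
      φ j '' (Metric.cthickening (ε / r j) F ∩ C) := by
    intro j ε hε
    ext x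
    constructor
    · rintro ⟨hx, u, hu, rfl⟩
      refine ⟨u, ⟨?_, hu⟩, rfl⟩
      rw [mem_cth F hFne _ hε.le, dj j _ (Set.mem_image_of_mem _ hu), dscale] at hx
      rw [mem_cth F hFne _ (div_pos hε (hr0 j)).le, le_div_iff₀' (hr0 j)]
      exact hx
    · rintro ⟨u, ⟨hu1, hu⟩, rfl⟩
      refine ⟨?_, Set.mem_image_of_mem _ hu⟩
      rw [mem_cth F hFne _ (div_pos hε (hr0 j)).le, le_div_iff₀' (hr0 j)] at hu1
      rw [mem_cth F hFne _ hε.le, dj j _ (Set.mem_image_of_mem _ hu), dscale]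
      exact hu1
  -- the generators
  have hFG : ∀ q, F ⊆ (G q)ᶜ := by
    intro q x hx hxG
    obtain ⟨k, hk⟩ := hFcov x hx
    exact Set.disjoint_left.1 (hGj q k) hxG (Set.image_mono hFC hk)
  have hfrG : ∀ q, frontier (G q) ⊆ ⋃ j, frontier (φ j '' C) := by
    intro q x hx
    rw [(hGopen q).frontier_eq] at hx
    have hxC : x ∈ C := by
      have : closure (G q) ⊆ C := closure_minimal (fun y hy => (hGsub q hy).1) hCcl
      exact this hx.1
    rw [hCdec] at hxC
    rcases hxC with hxC | hxC
    · obtain ⟨j, hj⟩ := Set.mem_iUnion.1 hxC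
      refine Set.mem_iUnion.2 ⟨j, ?_⟩
      rw [(himclosed j).frontier_eq]
      refine ⟨hj, fun hi => ?_⟩
      have : Disjoint (closure (G q)) (interior (φ j '' C)) :=
        ((hGj q j).mono_right interior_subset).closure_left isOpen_interior
      exact Set.disjoint_left.1 this hx.1 hi
    · obtain ⟨q', hq'⟩ := Set.mem_iUnion.1 hxC
      exfalso
      by_cases hqq : q' = q
      · subst hqq; exact hx.2 hq'
      · have := (hGdisj q q' (Ne.symm hqq)).closure_left (hGopen q')
        exact Set.disjoint_left.1 this hx.1 hq'
  have dG : ∀ q, ∀ x ∈ G q, Metric.infDist x (G q)ᶜ = Metric.infDist x F := by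
    intro q x hx
    apply le_antisymm
    · exact Metric.infDist_le_infDist_of_subset (hFG q) hFne
    · apply infDist_le_of _ _ _ (hFne.mono (hFG q))
      intro y hy
      obtain ⟨w, hw, hd⟩ := cross _ x y hx hy
      obtain ⟨j, hj⟩ := Set.mem_iUnion.1 (hfrG q hw)
      exact ⟨w, hFj j (hfrF j hj), hd⟩
  have gen : ∀ q ε, 0 < ε → volume (Metric.cthickening ε F ∩ G q) = volume (innerNbhd (G q) ε) := by
    intro q ε hε
    apply le_antisymm
    · apply measure_mono
      rintro x ⟨hx1, hx2⟩
      refine ⟨subset_closure hx2, ?_⟩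
      rw [dG q x hx2, ← mem_cth F hFne _ hε.le]
      exact hx1
    · have hsub : innerNbhd (G q) ε ⊆ (Metric.cthickening ε F ∩ G q) ∪ frontier (G q) := by
        rintro x ⟨hx1, hx2⟩
        by_cases hxG : x ∈ G q
        · left
          refine ⟨?_, hxG⟩
          rw [mem_cth F hFne _ hε.le, ← dG q x hxG]
          exact hx2
        · right
          rw [(hGopen q).frontier_eq]
          exact ⟨hx1, hxG⟩
      have hz : volume (frontier (G q)) = 0 :=
        measure_mono_null (hfrG q) (measure_iUnion_null hnullj)
      calc volume (innerNbhd (G q) ε) ≤ _ := measure_mono hsub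
        _ ≤ _ := measure_union_le _ _
        _ = _ := by rw [hz, add_zero]
  constructor
  · intro ε hε
    rw [decomp _ Metric.isClosed_cthickening.measurableSet]
    congr 1
    · apply Finset.sum_congr rfl
      intro j _
      rw [piece j ε hε, hvol]
    · apply Finset.sum_congr rfl
      intro q _
      exact gen q ε hε
  · have := decomp Set.univ MeasurableSet.univ
    simp only [Set.univ_inter] at this
    rw [this]
    congr 1
    rw [← this]
    exact Finset.sum_congr rfl fun j _ => hvol j C

theorem outer_bound {d : ℕ} (C : Set (EuclideanSpace ℝ (Fin d))) (hCcpt : IsCompact C)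
    (hCconv : Convex ℝ C) (hdim : (interior C).Nonempty) :
    ∃ K, 0 ≤ K ∧ ∀ ε, 0 < ε → ε ≤ 1 →
      (volume (Metric.cthickening ε C)).toReal ≤ (volume C).toReal + K * ε := by
  obtain ⟨x0, hx0⟩ := hdim
  obtain ⟨ρ, hρ, hball⟩ := Metric.isOpen_iff.1 isOpen_interior x0 hx0
  have hball' : Metric.ball x0 ρ ⊆ C := hball.trans interior_subset
  set R := ρ / 2 with hR
  have hR0 : 0 < R := by positivity
  have hsub : ∀ ε, 0 < ε → Metric.cthickening ε C ⊆ AffineMap.homothety x0 (1 + ε / R) '' C := by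
    intro ε hε y hy
    rw [hCcpt.cthickening_eq_biUnion_closedBall hε.le] at hy
    obtain ⟨c, hc, hyc⟩ := Set.mem_iUnion₂.1 hy
    rw [Metric.mem_closedBall, dist_eq_norm] at hyc
    set s := 1 + ε / R with hs
    have hs0 : 0 < s := by positivity
    have hw : x0 + (R / ε) • (y - c) ∈ C := by
      apply hball'
      rw [Metric.mem_ball, dist_eq_norm, add_sub_cancel_left, norm_smul, Real.norm_eq_abs,
        abs_of_pos (by positivity)]
      calc R / ε * ‖y - c‖ ≤ R / ε * ε := by gcongr
        _ = R := by field_simp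
        _ < ρ := by rw [hR]; linarith
    refine ⟨(1 / s) • c + ((ε / R) / s) • (x0 + (R / ε) • (y - c)), ?_, ?_⟩
    · apply hCconv hc hw (by positivity) (by positivity)
      rw [← add_div, ← hs, div_self hs0.ne']
    · rw [AffineMap.homothety_apply, vsub_eq_sub, vadd_eq_add, smul_sub, smul_add, smul_smul,
        smul_smul, mul_one_div_cancel hs0.ne', mul_div_cancel₀ _ hs0.ne', one_smul, smul_add, smul_smul,
        show ε / R * (R / ε) = 1 by field_simp, one_smul, hs, add_smul, one_smul]
      abel
  have hfin : volume C ≠ ⊤ := hCcpt.measure_lt_top.ne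
  refine ⟨(volume C).toReal * (1 / R) * ∑ i ∈ Finset.range d, (1 + 1 / R) ^ i, by positivity,
    fun ε hε hε1 => ?_⟩
  have h1 : (volume (Metric.cthickening ε C)).toReal ≤ (1 + ε / R) ^ d * (volume C).toReal := by
    have := measure_mono (μ := volume) (hsub ε hε)
    rw [Measure.addHaar_image_homothety, finrank_euclideanSpace_fin, abs_of_pos (by positivity)] at this
    have := ENNReal.toReal_mono (ENNReal.mul_ne_top ENNReal.ofReal_ne_top hfin) this
    rwa [ENNReal.toReal_mul, ENNReal.toReal_ofReal (by positivity)] at this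
  have h2 := mul_geom_sum (1 + ε / R) d
  have h3 : ∑ i ∈ Finset.range d, (1 + ε / R) ^ i ≤ ∑ i ∈ Finset.range d, (1 + 1 / R) ^ i := by
    apply Finset.sum_le_sum
    intro i _
    gcongr
  have h4 : (1 + ε / R) ^ d ≤ 1 + ε / R * ∑ i ∈ Finset.range d, (1 + 1 / R) ^ i := by
    have := mul_le_mul_of_nonneg_left h3 (by positivity : 0 ≤ ε / R)
    rw [add_sub_cancel_left] at h2
    linarith
  have h5 := mul_le_mul_of_nonneg_right h4 (ENNReal.toReal_nonneg (a := volume C))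
  calc _ ≤ _ := h1
    _ ≤ _ := h5
    _ = _ := by ring

/-- the main theorem with finitely many generators `G₁, …, G_Q`.
If the IFS is non-lattice then `F` is Minkowski measurable with content
`(∑_q ∑_m (g_q^{D-m}/(D-m)) κₘ(G_q)) / (∑_j r_j^D log r_j⁻¹)`; if it is of
lattice type then `F` is not Minkowski measurable but the average Minkowski
content exists and equals the same expression. -/
theorem stmt_2
    (d J Q : ℕ) (hd : 1 ≤ d) (hJ : 2 ≤ J) (hQ : 1 ≤ Q)
    (φ : Fin J → EuclideanSpace ℝ (Fin d) → EuclideanSpace ℝ (Fin d))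
    (r : Fin J → ℝ) (hr0 : ∀ j, 0 < r j) (hr1 : ∀ j, r j < 1)
    (hsim : ∀ j x y, dist (φ j x) (φ j y) = r j * dist x y)
    (F : Set (EuclideanSpace ℝ (Fin d)))
    (hFcpt : IsCompact F) (hFne : F.Nonempty)
    (hFinv : F = ⋃ j, φ j '' F)
    (D : ℝ) (hD : ∑ j, r j ^ D = 1)
    (C : Set (EuclideanSpace ℝ (Fin d))) (hC : C = convexHull ℝ F)
    (hdim : (interior C).Nonempty)
    (hTSC₁ : ∀ j, φ j '' interior C ⊆ interior C)
    (hTSC₂ : ∀ j k, j ≠ k → Disjoint (φ j '' interior C) (φ k '' interior C))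
    (hNTC : ¬ interior C ⊆ ⋃ j, φ j '' C)
    (hPWC : frontier C ⊆ F)
    (hDd : (d : ℝ) - 1 < D)
    -- T₀ = C \ Φ(C) has connected components G₁, …, G_Q
    (G : Fin Q → Set (EuclideanSpace ℝ (Fin d)))
    (hG : (⋃ q, G q) = C \ ⋃ j, φ j '' C)
    (hGopen : ∀ q, IsOpen (G q)) (hGbdd : ∀ q, Bornology.IsBounded (G q))
    (hGconn : ∀ q, IsConnected (G q))
    (hGdisj : ∀ q q', q ≠ q' → Disjoint (G q) (G q'))
    -- each G_q is diphase Steiner-like with inradius g_q and coefficients κₘ(G_q)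
    (g : Fin Q → ℝ) (hg : ∀ q, 0 < g q)
    (hginr : ∀ q, IsLUB {ρ : ℝ | ∃ x, Metric.ball x ρ ⊆ G q} (g q))
    (κ : Fin Q → ℕ → ℝ)
    (hSt₁ : ∀ q, ∀ ε : ℝ, 0 < ε → ε < g q →
      (volume (innerNbhd (G q) ε)).toReal = ∑ m ∈ Finset.range d, κ q m * ε ^ ((d : ℝ) - m))
    (hSt₂ : ∀ q, ∀ ε : ℝ, g q ≤ ε → (volume (innerNbhd (G q) ε)).toReal = -κ q d)
    (hGvol : ∀ q, (volume (G q)).toReal = -κ q d) :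
    -- non-lattice case
    (Dense ((AddSubgroup.closure (Set.range fun j => Real.log (r j)) :
        AddSubgroup ℝ) : Set ℝ) →
      0 < (∑ q, ∑ m ∈ Finset.range (d + 1), g q ^ (D - (m : ℝ)) / (D - (m : ℝ)) * κ q m) /
          (∑ j, r j ^ D * Real.log (r j)⁻¹) ∧
      Tendsto (fun ε : ℝ => (volume (Metric.cthickening ε F)).toReal * ε ^ (D - (d : ℝ)))
        (nhdsWithin 0 (Set.Ioi 0))
        (nhds ((∑ q, ∑ m ∈ Finset.range (d + 1), g q ^ (D - (m : ℝ)) / (D - (m : ℝ)) * κ q m) /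
          (∑ j, r j ^ D * Real.log (r j)⁻¹)))) ∧
    -- lattice case
    ((∃ a : ℝ, AddSubgroup.closure (Set.range fun j => Real.log (r j)) =
        AddSubgroup.closure {a}) →
      (¬ ∃ M : ℝ, 0 < M ∧
        Tendsto (fun ε : ℝ => (volume (Metric.cthickening ε F)).toReal * ε ^ (D - (d : ℝ)))
          (nhdsWithin 0 (Set.Ioi 0)) (nhds M)) ∧
      Tendsto (fun T : ℝ => (1 / Real.log T) *
          ∫ ε in Set.Ioc (1 / T) 1,
            ε ^ (D - (d : ℝ)) * (volume (Metric.cthickening ε F)).toReal / ε)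
        atTop
        (nhds ((∑ q, ∑ m ∈ Finset.range (d + 1), g q ^ (D - (m : ℝ)) / (D - (m : ℝ)) * κ q m) /
          (∑ j, r j ^ D * Real.log (r j)⁻¹)))) := by
  -- basic data
  have hCcpt : IsCompact C := hull_compact F C hFcpt hC hPWC
  have hCconv : Convex ℝ C := hC ▸ convex_convexHull ℝ F
  have hFC : F ⊆ C := hC ▸ subset_convexHull ℝ F
  obtain ⟨hgeo, hgvol⟩ := geo_eq φ r hr0 hsim F hFcpt hFne hFinv C hC hdim hTSC₁ hTSC₂ hPWC G hG
    hGopen hGdisj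
  have hCfin : volume C ≠ ⊤ := hCcpt.measure_lt_top.ne
  have hGfin : ∀ q, volume (G q) ≠ ⊤ := fun q => (hGbdd q).measure_lt_top.ne
  have hIfin : ∀ q ε, volume (innerNbhd (G q) ε) ≠ ⊤ := fun q ε =>
    ((hGbdd q).closure.subset (fun x hx => hx.1)).measure_lt_top.ne
  have hGpos : ∀ q, 0 < (volume (G q)).toReal := fun q =>
    ENNReal.toReal_pos ((hGopen q).measure_pos volume (hGconn q).nonempty).ne' (hGfin q)
  have hCpos : 0 < (volume C).toReal := by
    refine ENNReal.toReal_pos (ne_of_gt ?_) hCfin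
    exact (isOpen_interior.measure_pos volume hdim).trans_le (measure_mono interior_subset)
  have q0 : Fin Q := ⟨0, hQ⟩
  -- D < d
  have hD2 : D < d := by
    by_contra hc
    have hc : (d : ℝ) ≤ D := not_lt.1 hc
    have h1 : (1 : ℝ) ≤ ∑ j, r j ^ d := by
      rw [← hD]
      apply Finset.sum_le_sum
      intro j _
      rw [← Real.rpow_natCast (r j) d]
      exact Real.rpow_le_rpow_of_exponent_ge (hr0 j) (hr1 j).le hc
    have h2 := congrArg ENNReal.toReal hgvol
    rw [ENNReal.toReal_add (ENNReal.sum_ne_top.2 fun j _ =>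
      ENNReal.mul_ne_top ENNReal.ofReal_ne_top hCfin) (ENNReal.sum_ne_top.2 fun q _ => hGfin q),
      ENNReal.toReal_sum (fun j _ => ENNReal.mul_ne_top ENNReal.ofReal_ne_top hCfin),
      ENNReal.toReal_sum (fun q _ => hGfin q)] at h2
    have h3 : ∑ j, (ENNReal.ofReal (r j ^ d) * volume C).toReal = (∑ j, r j ^ d) * (volume C).toReal := by
      rw [Finset.sum_mul]
      apply Finset.sum_congr rfl
      intro j _
      rw [ENNReal.toReal_mul, ENNReal.toReal_ofReal (pow_pos (hr0 j) d).le]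
    rw [h3] at h2
    have h4 : 0 < ∑ q, (volume (G q)).toReal := Finset.sum_pos (fun q _ => hGpos q) ⟨q0, Finset.mem_univ _⟩
    nlinarith
  set α : ℝ := (d : ℝ) - D with hα
  have hα0 : 0 < α := by linarith
  set V : ℝ → ℝ := fun ε => (volume (Metric.cthickening ε F ∩ C)).toReal with hV
  set VF : ℝ → ℝ := fun ε => (volume (Metric.cthickening ε F)).toReal with hVF
  set p : Fin J → ℝ := fun j => r j ^ D with hp
  set τ : Fin J → ℝ := fun j => Real.log (r j)⁻¹ with hτ
  set Z : ℝ → ℝ := fun t => Real.exp (α * t) * V (Real.exp (-t)) with hZ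
  set ZF : ℝ → ℝ := fun t => Real.exp (α * t) * VF (Real.exp (-t)) with hZF
  set v : Fin Q → ℝ → ℝ := fun q t =>
    Real.exp (α * t) * (volume (innerNbhd (G q) (Real.exp (-t)))).toReal with hv
  set z : ℝ → ℝ := fun t => ∑ q, v q t with hz
  have hτ0 : ∀ j, 0 < τ j := fun j => Real.log_pos ((one_lt_inv₀ (hr0 j)).2 (hr1 j))
  have hVmono : Monotone V := by
    intro a b hab
    apply ENNReal.toReal_mono
    · exact ne_top_of_le_ne_top hCfin (measure_mono Set.inter_subset_right)
    · exact measure_mono (Set.inter_subset_inter_left _ (Metric.cthickening_mono hab F))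
  have hVFfin : ∀ ε, volume (Metric.cthickening ε F) ≠ ⊤ := fun ε =>
    (hFcpt.isBounded.cthickening).measure_lt_top.ne
  have hVFmono : Monotone VF := by
    intro a b hab
    exact ENNReal.toReal_mono (hVFfin b) (measure_mono (Metric.cthickening_mono hab F))
  have hexpanti : Antitone (fun t : ℝ => Real.exp (-t)) := fun a b hab =>
    Real.exp_le_exp.2 (by linarith)
  have hV0 : ∀ ε, 0 ≤ V ε := fun ε => ENNReal.toReal_nonneg
  have hVC : ∀ ε, V ε ≤ (volume C).toReal := fun ε =>
    ENNReal.toReal_mono hCfin (measure_mono Set.inter_subset_right)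
  have hv1 : ∀ q t, -Real.log (g q) < t →
      v q t = ∑ m ∈ Finset.range d, κ q m * Real.exp (((m : ℝ) - D) * t) := by
    intro q t ht
    have hlt : Real.exp (-t) < g q := by
      rw [← Real.lt_log_iff_exp_lt (hg q)]; linarith
    simp only [hv]
    rw [hSt₁ q _ (Real.exp_pos _) hlt, Finset.mul_sum]
    apply Finset.sum_congr rfl
    intro m _
    rw [← Real.exp_mul, mul_left_comm, ← Real.exp_add]
    congr 2
    rw [hα]; ring
  have hv2 : ∀ q t, t ≤ -Real.log (g q) → v q t = -κ q d * Real.exp (((d : ℝ) - D) * t) := by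
    intro q t ht
    have hge : g q ≤ Real.exp (-t) := by
      rw [← Real.log_le_iff_le_exp (hg q)]; linarith
    simp only [hv]
    rw [hSt₂ q _ hge, mul_comm]
  have hvint := fun q => diphase_int (hg q) hDd hD2 (hv1 q) (hv2 q)
  have hvb := fun q => diphase_bound (hg q) hDd hD2 (hv1 q) (hv2 q)
  choose Kq hKq using hvb
  have hRS : RS p τ Z z α (D - d + 1) (volume C).toReal (∑ q, Kq q) := by
    refine ⟨fun j => Real.rpow_pos_of_pos (hr0 j) D, hD, hτ0, hα0, by linarith, ?_, ?_, ?_, ?_, ?_, ?_⟩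
    · have : Measurable (fun t => V (Real.exp (-t))) := (hVmono.comp_antitone hexpanti).measurable
      exact (by fun_prop : Measurable fun t : ℝ => Real.exp (α * t)).mul this
    · intro t
      exact mul_nonneg (Real.exp_pos _).le (hV0 _)
    · intro t
      rw [mul_comm]
      exact mul_le_mul_of_nonneg_left (hVC _) (Real.exp_pos _).le
    · intro t
      rw [Finset.sum_mul]
      exact (Finset.abs_sum_le_sum_abs _ _).trans (Finset.sum_le_sum fun q _ => hKq q t)
    · intro t
      have hfin2 : ∀ j ∈ (Finset.univ : Finset (Fin J)), ENNReal.ofReal (r j ^ d) *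
          volume (Metric.cthickening (Real.exp (-t) / r j) F ∩ C) ≠ ⊤ := fun j _ =>
        ENNReal.mul_ne_top ENNReal.ofReal_ne_top
          (ne_top_of_le_ne_top hCfin (measure_mono Set.inter_subset_right))
      have h2 := congrArg ENNReal.toReal (hgeo (Real.exp (-t)) (Real.exp_pos _))
      rw [ENNReal.toReal_add (ENNReal.sum_ne_top.2 hfin2)
        (ENNReal.sum_ne_top.2 fun q _ => hIfin q _), ENNReal.toReal_sum hfin2,
        ENNReal.toReal_sum (fun q _ => hIfin q _)] at h2
      simp only [hZ, hz, hv]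
      rw [← Finset.mul_sum]
      have h3 : V (Real.exp (-t)) = ∑ j, r j ^ d * V (Real.exp (-t) / r j) +
          ∑ q, (volume (innerNbhd (G q) (Real.exp (-t)))).toReal := by
        simp only [hV]
        rw [h2]
        congr 1
        apply Finset.sum_congr rfl
        intro j _
        rw [ENNReal.toReal_mul, ENNReal.toReal_ofReal (pow_pos (hr0 j) d).le]
      rw [h3, mul_add, Finset.mul_sum]
      congr 1
      apply Finset.sum_congr rfl
      intro j _
      have e1 : Real.exp (-(t - τ j)) = Real.exp (-t) / r j := by
        rw [neg_sub, sub_eq_add_neg, Real.exp_add, hτ]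
        simp only
        rw [Real.exp_log (inv_pos.2 (hr0 j))]
        field_simp
      have e2 : Real.exp (α * t) * r j ^ d = p j * Real.exp (α * (t - τ j)) := by
        simp only [hp, hτ]
        rw [← Real.rpow_natCast (r j) d, Real.rpow_def_of_pos (hr0 j), Real.rpow_def_of_pos (hr0 j),
          ← Real.exp_add, ← Real.exp_add, Real.log_inv, hα]
        congr 1; ring
      rw [e1, ← mul_assoc, e2, mul_assoc]
    · intro t h hh
      simp only [hZ]
      rw [mul_add, Real.exp_add, mul_comm (Real.exp (α * t)), mul_assoc]
      apply mul_le_mul_of_nonneg_left _ (Real.exp_pos _).le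
      apply mul_le_mul_of_nonneg_left _ (Real.exp_pos _).le
      exact hVmono (hexpanti (by linarith))
  -- the integral of z
  have hzint : ∫ t, z t = ∑ q, ∑ m ∈ Finset.range (d + 1),
      g q ^ (D - (m : ℝ)) / (D - (m : ℝ)) * κ q m := by
    simp only [hz]
    rw [integral_finsetSum _ fun q _ => (hvint q).1]
    exact Finset.sum_congr rfl fun q _ => (hvint q).2
  have hzpos : 0 < ∫ t, z t := by
    have hv0 : ∀ q t, 0 ≤ v q t := fun q t => mul_nonneg (Real.exp_pos _).le ENNReal.toReal_nonneg
    have hz0 : 0 ≤ z := fun t => Finset.sum_nonneg fun q _ => hv0 q t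
    rw [integral_pos_iff_support_of_nonneg hz0 hRS.zint]
    have hsub : Set.Iic (-Real.log (g q0)) ⊆ Function.support z := by
      intro t ht
      have h1 : 0 < v q0 t := by
        rw [hv2 q0 t ht, ← hGvol q0]
        exact mul_pos (hGpos q0) (Real.exp_pos _)
      have h2 : v q0 t ≤ z t :=
        Finset.single_le_sum (f := fun q => v q t) (fun q _ => hv0 q t) (Finset.mem_univ q0)
      exact (h1.trans_le h2).ne'
    refine lt_of_lt_of_le ?_ (measure_mono hsub)
    simp
  -- the outer part
  obtain ⟨K2, hK20, hK2⟩ := outer_bound C hCcpt hCconv hdim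
  set E : ℝ → ℝ := fun t => ZF t - Z t with hE
  have hEb : ∀ t, 0 ≤ t → |E t| ≤ K2 * Real.exp ((α - 1) * t) := by
    intro t ht
    have h1 : V (Real.exp (-t)) ≤ VF (Real.exp (-t)) :=
      ENNReal.toReal_mono (hVFfin _) (measure_mono Set.inter_subset_left)
    have h2 : VF (Real.exp (-t)) ≤ V (Real.exp (-t)) + K2 * Real.exp (-t) := by
      set ε := Real.exp (-t) with hε
      have hε0 : 0 < ε := Real.exp_pos _
      have hε1 : ε ≤ 1 := by rw [hε, Real.exp_le_one_iff]; linarith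
      have hCthfin : volume (Metric.cthickening ε C) ≠ ⊤ :=
        (hCcpt.isBounded.cthickening).measure_lt_top.ne
      have hsubC : C ⊆ Metric.cthickening ε C := Metric.self_subset_cthickening C
      have m1 : volume (Metric.cthickening ε F) ≤
          volume (Metric.cthickening ε F ∩ C) + volume (Metric.cthickening ε C \ C) := by
        refine (measure_mono ?_).trans (measure_union_le _ _)
        intro x hx
        by_cases hxC : x ∈ C
        · exact Or.inl ⟨hx, hxC⟩
        · exact Or.inr ⟨Metric.cthickening_subset_of_subset ε hFC hx, hxC⟩
      have hdfin : volume (Metric.cthickening ε C \ C) ≠ ⊤ :=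
        ne_top_of_le_ne_top hCthfin (measure_mono Set.diff_subset)
      have hifin : volume (Metric.cthickening ε F ∩ C) ≠ ⊤ :=
        ne_top_of_le_ne_top hCfin (measure_mono Set.inter_subset_right)
      have m2 := ENNReal.toReal_mono (ENNReal.add_ne_top.2 ⟨hifin, hdfin⟩) m1
      rw [ENNReal.toReal_add hifin hdfin] at m2
      have m3 : (volume (Metric.cthickening ε C \ C)).toReal =
          (volume (Metric.cthickening ε C)).toReal - (volume C).toReal := by
        rw [measure_diff hsubC hCcpt.isClosed.measurableSet.nullMeasurableSet hCfin,
          ENNReal.toReal_sub_of_le (measure_mono hsubC) hCthfin]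
      have m4 := hK2 ε hε0 hε1
      simp only [hVF, hV]
      linarith
    have h3 : E t = Real.exp (α * t) * (VF (Real.exp (-t)) - V (Real.exp (-t))) := by
      simp only [hE, hZF, hZ]; ring
    rw [h3, abs_of_nonneg (mul_nonneg (Real.exp_pos _).le (by linarith))]
    have h4 : K2 * Real.exp ((α - 1) * t) = Real.exp (α * t) * (K2 * Real.exp (-t)) := by
      rw [mul_left_comm, ← Real.exp_add]; ring_nf
    rw [h4]
    exact mul_le_mul_of_nonneg_left (by linarith) (Real.exp_pos _).le
  have hα1 : α - 1 < 0 := by linarith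
  have hE0 : Tendsto E atTop (nhds 0) := by
    apply squeeze_zero_norm' (a := fun t => K2 * Real.exp ((α - 1) * t))
    · filter_upwards [eventually_ge_atTop 0] with t ht using hEb t ht
    · have : Tendsto (fun t : ℝ => Real.exp ((α - 1) * t)) atTop (nhds 0) :=
        Real.tendsto_exp_atBot.comp (tendsto_id.const_mul_atTop_of_neg hα1)
      simpa using this.const_mul K2
  have hZFm : Measurable ZF := by
    have : Measurable (fun t => VF (Real.exp (-t))) := (hVFmono.comp_antitone hexpanti).measurable
    exact (by fun_prop : Measurable fun t : ℝ => Real.exp (α * t)).mul this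
  have hEm : Measurable E := hZFm.sub hRS.Zm
  have hEces := cesaro_int E hEm K2 0 (fun t ht => (hEb t ht.le).trans (by
    have : Real.exp ((α - 1) * t) ≤ 1 := by
      rw [Real.exp_le_one_iff]; nlinarith
    nlinarith)) hE0
  have hZFi : ∀ a b, IntervalIntegrable ZF volume a b := by
    intro a b
    have : IntervalIntegrable (fun t => VF (Real.exp (-t))) volume a b :=
      (hVFmono.comp_antitone hexpanti).intervalIntegrable
    exact this.continuousOn_mul (by fun_prop)
  have hrel : ∀ ε, 0 < ε → VF ε * ε ^ (D - (d : ℝ)) = ZF (-Real.log ε) := by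
    intro ε hε
    simp only [hZF]
    rw [neg_neg, Real.exp_log hε, Real.rpow_def_of_pos hε, mul_comm, hα]
    congr 2; ring
  rw [← hzint]
  refine ⟨fun hdense => ⟨div_pos hzpos hRS.mu_pos, ?_⟩, fun ⟨a, ha⟩ => ⟨?_, ?_⟩⟩
  · -- non-lattice case
    have hcl : AddSubgroup.closure (Set.range τ) =
        AddSubgroup.closure (Set.range fun j => Real.log (r j)) := by
      apply le_antisymm
      · rw [AddSubgroup.closure_le]
        rintro _ ⟨j, rfl⟩
        simp only [hτ, Real.log_inv]
        exact neg_mem (AddSubgroup.subset_closure ⟨j, rfl⟩)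
      · rw [AddSubgroup.closure_le]
        rintro _ ⟨j, rfl⟩
        have h1 : Real.log (r j) = -τ j := by simp only [hτ, Real.log_inv, neg_neg]
        simp only [h1]
        exact neg_mem (AddSubgroup.subset_closure ⟨j, rfl⟩)
    have h1 := hRS.nonlattice (by rw [hcl]; exact hdense)
    have h2 : Tendsto ZF atTop (nhds ((∫ s, z s) / ∑ j, p j * τ j)) := by
      have := h1.add hE0
      rw [add_zero] at this
      refine this.congr fun t => ?_
      simp only [hE]; ring
    have h3 : Tendsto (fun ε : ℝ => -Real.log ε) (nhdsWithin 0 (Set.Ioi 0)) atTop :=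
      tendsto_neg_atBot_atTop.comp Real.tendsto_log_nhdsGT_zero
    refine (h2.comp h3).congr' ?_
    filter_upwards [self_mem_nhdsWithin] with ε hε
    exact (hrel ε hε).symm
  · -- lattice case : not measurable
    rintro ⟨M, hM0, hM⟩
    have h3 : Tendsto (fun t : ℝ => Real.exp (-t)) atTop (nhdsWithin 0 (Set.Ioi 0)) := by
      rw [tendsto_nhdsWithin_iff]
      exact ⟨Real.tendsto_exp_neg_atTop_nhds_zero, Eventually.of_forall fun t => Real.exp_pos _⟩
    have h4 : Tendsto ZF atTop (nhds M) := by
      refine (hM.comp h3).congr fun t => ?_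
      have := hrel (Real.exp (-t)) (Real.exp_pos _)
      rw [Real.log_exp, neg_neg] at this
      exact this
    have h5 : Tendsto Z atTop (nhds M) := by
      have := h4.sub hE0
      rw [sub_zero] at this
      refine this.congr fun t => ?_
      simp only [hE]; ring
    have h6 : ∀ j, ∃ n : ℤ, n • a = Real.log (r j) := by
      intro j
      have : Real.log (r j) ∈ AddSubgroup.closure (Set.range fun j => Real.log (r j)) :=
        AddSubgroup.subset_closure ⟨j, rfl⟩
      rw [ha] at this
      exact AddSubgroup.mem_closure_singleton.1 this
    choose n hn using h6
    have ha0 : a ≠ 0 := by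
      rintro rfl
      have h7 := hn ⟨0, by omega⟩
      rw [smul_zero] at h7
      exact (Real.log_neg (hr0 _) (hr1 _)).ne h7.symm
    have hτn : ∀ j, τ j = ((n j).natAbs : ℝ) * |a| := by
      intro j
      rw [← abs_of_pos (hτ0 j)]
      simp only [hτ]
      rw [Real.log_inv, abs_neg, ← hn j, zsmul_eq_mul, abs_mul, Nat.cast_natAbs, Int.cast_abs]
    have ha' : 0 < |a| := abs_pos.2 ha0
    have h7 := hRS.lattice_sum |a| ha' (fun j => (n j).natAbs) hτn M h5
    have h8 := lattice_contra d Q D g κ v hDd hD2 hv1 hv2 |a| ha' _ h7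
    have h9 : |a| * ∑ j, p j * (((n j).natAbs : ℝ) * M) = M * ∑ j, p j * τ j := by
      rw [Finset.mul_sum, Finset.mul_sum]
      apply Finset.sum_congr rfl
      intro j _
      rw [hτn j]; ring
    rw [h8, mul_zero] at h9
    exact (mul_pos hM0 hRS.mu_pos).ne h9
  · -- average content
    have h1 := hRS.average.add hEces
    rw [add_zero] at h1
    have h2 := h1.comp Real.tendsto_log_atTop
    refine h2.congr' ?_
    filter_upwards [eventually_gt_atTop 1] with T hT
    have hL : 0 < Real.log T := Real.log_pos hT
    have hEi : IntervalIntegrable E volume 0 (Real.log T) := (hZFi _ _).sub (hRS.Zii _ _)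
    simp only [Function.comp]
    rw [← mul_add, ← intervalIntegral.integral_add (hRS.Zii _ _) hEi]
    congr 1
    have himg : Set.Ioc (1 / T) 1 = (fun t : ℝ => Real.exp (-t)) '' Set.Ico 0 (Real.log T) := by
      ext ε
      constructor
      · rintro ⟨he1, he2⟩
        have hε : 0 < ε := lt_trans (by positivity) he1
        refine ⟨-Real.log ε, ⟨?_, ?_⟩, ?_⟩
        · linarith [Real.log_nonpos hε.le he2]
        · have := Real.log_lt_log (by positivity) he1
          rw [one_div, Real.log_inv] at this
          linarith
        · simp [Real.exp_log hε]
      · rintro ⟨t, ⟨ht1, ht2⟩, rfl⟩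
        constructor
        · have h3 : Real.exp (-Real.log T) < Real.exp (-t) := Real.exp_lt_exp.2 (by linarith)
          rwa [Real.exp_neg, Real.exp_log (by linarith), ← one_div] at h3
        · show Real.exp (-t) ≤ 1
          rw [Real.exp_le_one_iff]; linarith
    rw [himg, integral_image_eq_integral_abs_deriv_smul (f' := fun t => -Real.exp (-t))
      measurableSet_Ico (fun t _ => ?_) (fun x _ y _ hxy => ?_)]
    · rw [intervalIntegral.integral_of_le hL.le, ← integral_Ico_eq_integral_Ioc]
      apply setIntegral_congr_fun measurableSet_Ico
      intro t _
      have hpos := Real.exp_pos (-t)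
      have := hrel (Real.exp (-t)) hpos
      rw [Real.log_exp, neg_neg] at this
      simp only [abs_neg, abs_of_pos hpos, smul_eq_mul]
      have h5 : Z t + E t = ZF t := by simp only [hE]; ring
      show Z t + E t = _
      rw [h5, ← this]
      field_simp
      rfl
    · have := (Real.hasDerivAt_exp (-t)).comp t (hasDerivAt_neg t)
      simp only [mul_neg, mul_one] at this
      exact this.hasDerivWithinAt
    · have := Real.exp_injective hxy
      linarith
end

section
/- Let F = ⋃_{j=1}^J φ_j(F) ⊂ ℝ be a self-similar fractal in dimension d = 1, where the similitudes φ_j have ratios 0 < r_j < 1, satisfying the open set condition with the interior of the interval I = [F] as feasible open set, and suppose I ∖ ⋃_j φ_j(I) consists of Q ≥ 1 open intervals (gaps) of lengths l_1,…,l_Q. Let D ∈ (0,1) be the unique real root of ∑_{j=1}^J r_j^D = 1. If the IFS is of non-lattice type (the subgroup ∑_j (log r_j)ℤ of ℝ is dense), then F is Minkowski measurable with Minkowski content M(F) = (2^{1−D} ∑_{q=1}^Q l_q^D) / (D(1−D) ∑_{j=1}^J r_j^D log r_j^{−1}). -/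
open MeasureTheory Filter

lemma ren_semigroup_dense {J : ℕ} (c : Fin J → ℝ) (hc : ∀ j, 0 < c j) (j0 : Fin J)
    (hd : Dense ((AddSubgroup.closure (Set.range fun j => - c j) : AddSubgroup ℝ) : Set ℝ))
    (δ : ℝ) (hδ : 0 < δ) :
    ∃ R : ℝ, ∀ x, R ≤ x → ∃ s ∈ AddSubmonoid.closure (Set.range c), x - δ < s ∧ s ≤ x := by
  have hdiff : ∀ x ∈ AddSubgroup.closure (Set.range fun j => - c j),
      ∃ a ∈ AddSubmonoid.closure (Set.range c), ∃ b ∈ AddSubmonoid.closure (Set.range c),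
        x = b - a := by
    intro x hx
    induction hx using AddSubgroup.closure_induction with
    | mem x hx =>
      obtain ⟨j, rfl⟩ := hx
      exact ⟨c j, AddSubmonoid.subset_closure ⟨j, rfl⟩, 0, zero_mem _, by simp⟩
    | zero => exact ⟨0, zero_mem _, 0, zero_mem _, by simp⟩
    | add x y _ _ hx hy =>
      obtain ⟨a, ha, b, hb, rfl⟩ := hx
      obtain ⟨a', ha', b', hb', rfl⟩ := hy
      exact ⟨a + a', add_mem ha ha', b + b', add_mem hb hb', by ring⟩
    | neg x _ hx =>
      obtain ⟨a, ha, b, hb, rfl⟩ := hx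
      exact ⟨b, hb, a, ha, by ring⟩
  have hnn : ∀ x ∈ AddSubmonoid.closure (Set.range c), 0 ≤ x := by
    intro x hx
    induction hx using AddSubmonoid.closure_induction with
    | mem x hx => obtain ⟨j, rfl⟩ := hx; exact (hc j).le
    | zero => exact le_rfl
    | add x y _ _ hx hy => exact add_nonneg hx hy
  obtain ⟨d, hd1, hd2⟩ := hd.exists_mem_open (isOpen_Ioo (a := (0:ℝ)) (b := δ))
    ⟨δ / 2, by constructor <;> linarith⟩
  obtain ⟨a', ha', b', hb', hab⟩ := hdiff d hd1
  have hcm : c j0 ∈ AddSubmonoid.closure (Set.range c) := AddSubmonoid.subset_closure ⟨j0, rfl⟩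
  obtain ⟨a, ha, b, hb, ha0, hab⟩ : ∃ a ∈ AddSubmonoid.closure (Set.range c),
      ∃ b ∈ AddSubmonoid.closure (Set.range c), 0 < a ∧ d = b - a :=
    ⟨a' + c j0, add_mem ha' hcm, b' + c j0, add_mem hb' hcm, by
      linarith [hnn a' ha', hc j0], by rw [hab]; ring⟩
  obtain ⟨hd0, hdδ⟩ := hd2
  obtain ⟨N, hN⟩ := exists_nat_ge (a / d)
  rw [div_le_iff₀ hd0] at hN
  refine ⟨N * a, fun x hx => ?_⟩
  have hx0 : 0 ≤ x := le_trans (by positivity) hx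
  set n := ⌊x / a⌋₊ with hn
  have hn1 : (n : ℝ) * a ≤ x := by
    rw [← le_div_iff₀ ha0]; exact Nat.floor_le (by positivity)
  have hn2 : x < (n + 1) * a := by
    rw [← div_lt_iff₀ ha0]; exact Nat.lt_floor_add_one _
  have hNn : N ≤ n := Nat.le_floor (by rwa [le_div_iff₀ ha0])
  have hNn' : (N : ℝ) ≤ n := by exact_mod_cast hNn
  have hnd : a ≤ n * d := hN.trans (by gcongr)
  set k := ⌊(x - n * a) / d⌋₊ with hk
  have hk1 : (k : ℝ) * d ≤ x - n * a := by
    rw [← le_div_iff₀ hd0]; exact Nat.floor_le (div_nonneg (by linarith) hd0.le)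
  have hk2 : x - n * a < (k + 1) * d := by
    rw [← div_lt_iff₀ hd0]; exact Nat.lt_floor_add_one _
  have hkn : k ≤ n := by
    have : (k : ℝ) ≤ n := by
      by_contra! h
      nlinarith
    exact_mod_cast this
  refine ⟨(n - k) • a + k • b, add_mem (nsmul_mem ha _) (nsmul_mem hb _), ?_⟩
  have e : (n - k) • a + k • b = n * a + k * d := by
    simp only [nsmul_eq_mul, Nat.cast_sub hkn, hab]; ring
  rw [e]
  constructor <;> linarith

lemma ren_net {J : ℕ} (c : Fin J → ℝ) (hc : ∀ j, 0 < c j) (j0 : Fin J)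
    (hd : Dense ((AddSubgroup.closure (Set.range fun j => - c j) : AddSubgroup ℝ) : Set ℝ))
    (δ : ℝ) (hδ : 0 < δ) :
    ∃ R : ℝ, ∀ K : ℝ, ∃ s : Finset ℝ, (∀ x ∈ s, x ∈ AddSubmonoid.closure (Set.range c)) ∧
      ∀ x, R ≤ x → x ≤ R + K → (∃ y ∈ s, y ≤ x ∧ x ≤ y + δ) ∧ (∃ y ∈ s, x ≤ y ∧ y ≤ x + δ) := by
  obtain ⟨R, hR⟩ := ren_semigroup_dense c hc j0 hd (δ / 2) (by positivity)
  choose! S hS1 hS2 hS3 using hR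
  refine ⟨R, fun K => ?_⟩
  set N := ⌊K / (δ / 2)⌋₊ + 3
  classical
  refine ⟨(Finset.range N).image (fun i : ℕ => S (R + i * (δ / 2))), ?_, ?_⟩
  · intro x hx
    simp only [Finset.mem_image] at hx
    obtain ⟨i, _, rfl⟩ := hx
    exact hS1 _ (by have : 0 ≤ (i:ℝ) * (δ / 2) := by positivity
                    linarith)
  · intro x h1 h2
    set i := ⌊(x - R) / (δ / 2)⌋₊ with hi
    have hi1 : (i : ℝ) * (δ / 2) ≤ x - R := by
      rw [← le_div_iff₀ (by positivity)]
      exact Nat.floor_le (div_nonneg (by linarith) (by positivity))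
    have hi2 : x - R < (i + 1) * (δ / 2) := by
      rw [← div_lt_iff₀ (by positivity)]; exact Nat.lt_floor_add_one _
    have hiN : i + 2 < N := by
      have : i ≤ ⌊K / (δ / 2)⌋₊ := Nat.floor_le_floor (by gcongr; linarith)
      omega
    have q1 : 0 ≤ (i:ℝ) * (δ / 2) := by positivity
    constructor
    · refine ⟨_, Finset.mem_image.2 ⟨i, Finset.mem_range.2 (by omega), rfl⟩, ?_⟩
      have := hS2 (R + i * (δ / 2)) (by linarith)
      have := hS3 (R + i * (δ / 2)) (by linarith)
      constructor <;> linarith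
    · refine ⟨_, Finset.mem_image.2 ⟨i + 2, Finset.mem_range.2 hiN, rfl⟩, ?_⟩
      push_cast
      have := hS2 (R + (i + 2) * (δ / 2)) (by linarith)
      have := hS3 (R + (i + 2) * (δ / 2)) (by linarith)
      constructor <;> linarith

lemma ren_shift {J : ℕ} (c p : Fin J → ℝ) (hp : ∀ j, 0 < p j) (hp1 : ∑ j, p j = 1)
    (f h : ℝ → ℝ) (hf : ∀ t, f t = ∑ j, p j * f (t - c j) + h t)
    (hh : Tendsto h atTop (nhds 0)) (β : ℝ)
    (hβ : ∀ ε > 0, ∀ᶠ x in atTop, f x < β + ε) :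
    ∀ s ∈ AddSubmonoid.closure (Set.range c), ∀ t : ℕ → ℝ, Tendsto t atTop atTop →
      Tendsto (fun n => f (t n)) atTop (nhds β) →
      Tendsto (fun n => f (t n - s)) atTop (nhds β) := by
  intro s hs
  induction hs using AddSubmonoid.closure_induction with
  | zero => intro t _ h2; simpa using h2
  | add x y _ _ hx hy =>
    intro t h1 h2
    have := hy (fun n => t n - x) (tendsto_atTop_add_const_right _ (-x) h1) (hx t h1 h2)
    simpa only [sub_sub] using this
  | mem x hx =>
    obtain ⟨j, rfl⟩ := hx
    intro t h1 h2
    have hsh : ∀ i, Tendsto (fun n => t n - c i) atTop atTop := fun i =>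
      tendsto_atTop_add_const_right _ (-c i) h1
    rw [Metric.tendsto_nhds]
    intro ε hε
    have hpj := hp j
    have hpj1 : p j ≤ 1 := by
      rw [← hp1]; exact Finset.single_le_sum (fun i _ => (hp i).le) (Finset.mem_univ j)
    set η := ε * p j / 4 with hη
    have hη0 : 0 < η := by positivity
    have e1 : ∀ᶠ n in atTop, ∀ i, f (t n - c i) < β + η :=
      eventually_all.2 fun i => (hsh i).eventually (hβ η hη0)
    have e2 : ∀ᶠ n in atTop, β - η < f (t n) := h2.eventually (lt_mem_nhds (by linarith))
    have e3 : ∀ᶠ n in atTop, h (t n) < η := (hh.comp h1).eventually (gt_mem_nhds hη0)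
    filter_upwards [e1, e2, e3] with n e1 e2 e3
    rw [hf (t n), ← Finset.add_sum_erase _ _ (Finset.mem_univ j)] at e2
    have hs1 : ∑ i ∈ Finset.univ.erase j, p i * f (t n - c i)
        ≤ ∑ i ∈ Finset.univ.erase j, p i * (β + η) :=
      Finset.sum_le_sum fun i _ => mul_le_mul_of_nonneg_left (e1 i).le (hp i).le
    rw [← Finset.sum_mul] at hs1
    have hs2 : ∑ i ∈ Finset.univ.erase j, p i = 1 - p j := by
      rw [← hp1, ← Finset.add_sum_erase _ _ (Finset.mem_univ j)]; ring
    rw [hs2] at hs1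
    rw [Real.dist_eq, abs_lt]
    have := e1 j
    have hηε : η < ε := by rw [hη]; nlinarith
    constructor
    · have : p j * (β - ε) < p j * f (t n - c j) := by nlinarith
      have := lt_of_mul_lt_mul_left this hpj.le
      linarith
    · linarith

lemma ren_seq (f : ℝ → ℝ) (M : ℝ) (hM : ∀ x, |f x| ≤ M) :
    ∃ (β : ℝ) (t : ℕ → ℝ), Tendsto t atTop atTop ∧
      Tendsto (fun n => f (t n)) atTop (nhds β) ∧ ∀ ε > 0, ∀ᶠ x in atTop, f x < β + ε := by
  have b1 : IsBoundedUnder (· ≤ ·) atTop f := isBoundedUnder_of ⟨M, fun x => (abs_le.1 (hM x)).2⟩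
  have b2 : IsBoundedUnder (· ≥ ·) atTop f := isBoundedUnder_of ⟨-M, fun x => (abs_le.1 (hM x)).1⟩
  set β := limsup f atTop with hβ
  have h1 : ∀ ε > 0, ∀ᶠ x in atTop, f x < β + ε := fun ε hε =>
    eventually_lt_of_limsup_lt (by rw [← hβ]; linarith) b1
  have h2 : ∀ n : ℕ, ∃ x : ℝ, (n : ℝ) ≤ x ∧ β - 1 / ((n : ℝ) + 1) < f x := by
    intro n
    have : (0:ℝ) < 1 / ((n : ℝ) + 1) := by positivity
    have hfr : ∃ᶠ x in atTop, β - 1 / ((n : ℝ) + 1) < f x :=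
      frequently_lt_of_lt_limsup b2.isCoboundedUnder_le (by rw [← hβ]; linarith)
    obtain ⟨x, h, h'⟩ := (hfr.and_eventually (eventually_ge_atTop (n:ℝ))).exists
    exact ⟨x, h', h⟩
  choose t ht1 ht2 using h2
  have tt : Tendsto t atTop atTop := tendsto_atTop_mono ht1 tendsto_natCast_atTop_atTop
  refine ⟨β, t, tt, ?_, h1⟩
  rw [Metric.tendsto_nhds]
  intro ε hε
  have := (tendsto_one_div_add_atTop_nhds_zero_nat (𝕜 := ℝ)).eventually (gt_mem_nhds hε)
  filter_upwards [this, tt.eventually (h1 ε hε)] with n a1 a2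
  rw [Real.dist_eq, abs_lt]
  have := ht2 n
  constructor <;> linarith

theorem renewal {J : ℕ} (c p : Fin J → ℝ) (hc : ∀ j, 0 < c j) (hp : ∀ j, 0 < p j)
    (hp1 : ∑ j, p j = 1) (f h : ℝ → ℝ) (hf0 : ∀ t, 0 ≤ f t) (hh0 : ∀ t, 0 ≤ h t)
    (hf : ∀ t, f t = ∑ j, p j * f (t - c j) + h t)
    (θ : ℝ) (hθ : 0 < θ) (hslow : ∀ t s, 0 ≤ s → f (t + s) ≤ Real.exp (θ * s) * f t)
    (hfi : ∀ t, IntegrableOn f (Set.Iic t)) (hhi : Integrable h)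
    (hh : Tendsto h atTop (nhds 0))
    (hd : Dense ((AddSubgroup.closure (Set.range fun j => - c j) : AddSubgroup ℝ) : Set ℝ)) :
    Tendsto f atTop (nhds ((∫ t, h t) / ∑ j, p j * c j)) := by
  obtain ⟨j0⟩ : Nonempty (Fin J) := by
    by_contra hne
    rw [not_nonempty_iff] at hne
    simp at hp1
  set μ := ∑ j, p j * c j with hμ
  have hμ0 : 0 < μ := Finset.sum_pos (fun j _ => mul_pos (hp j) (hc j)) ⟨j0, Finset.mem_univ _⟩
  obtain ⟨K, hK⟩ : ∃ K, ∀ j, c j ≤ K := by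
    obtain ⟨K, hK⟩ := (Set.finite_range c).bddAbove
    exact ⟨K, fun j => hK ⟨j, rfl⟩⟩
  have hii : ∀ u v, IntervalIntegrable f volume u v := fun u v => by
    rw [intervalIntegrable_iff]
    exact (hfi (max u v)).mono_set (fun x hx => hx.2)
  -- the conserved quantity
  have hshift : ∀ (t s : ℝ), IntegrableOn (fun x => f (x - s)) (Set.Iic t) ∧
      ∫ x in Set.Iic t, f (x - s) = ∫ x in Set.Iic (t - s), f x := by
    intro t s
    have hmp : MeasurePreserving (fun x : ℝ => x - s) volume volume :=
      measurePreserving_sub_right volume s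
    have hme : MeasurableEmbedding (fun x : ℝ => x - s) := measurableEmbedding_subRight s
    have hpre : (fun x : ℝ => x - s) ⁻¹' (Set.Iic (t - s)) = Set.Iic t := by
      ext x; simp
    constructor
    · rw [← hpre]
      exact (hmp.integrableOn_comp_preimage hme).2 (hfi _)
    · rw [← hpre]
      exact hmp.setIntegral_preimage_emb hme f _
  have hW : ∀ t, ∑ j, p j * ∫ x in (t - c j)..t, f x = ∫ x in Set.Iic t, h x := by
    intro t
    have e1 : ∫ x in Set.Iic t, f x = ∑ j, p j * (∫ x in Set.Iic (t - c j), f x)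
        + ∫ x in Set.Iic t, h x := by
      rw [integral_congr_ae (Eventually.of_forall hf), integral_add _ hhi.integrableOn,
        integral_finsetSum]
      · congr 1
        refine Finset.sum_congr rfl fun j _ => ?_
        rw [integral_const_mul, (hshift t (c j)).2]
      · intro j _
        exact (hshift t (c j)).1.const_mul _
      · exact integrable_finsetSum _ fun j _ => (hshift t (c j)).1.const_mul _
    have e2 : ∀ j, ∫ x in (t - c j)..t, f x =
        (∫ x in Set.Iic t, f x) - ∫ x in Set.Iic (t - c j), f x := fun j =>
      (intervalIntegral.integral_Iic_sub_Iic (hfi _) (hfi _)).symm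
    simp only [e2, mul_sub, Finset.sum_sub_distrib, ← Finset.sum_mul, hp1]
    linarith
  have hWle : ∀ t, ∫ x in Set.Iic t, h x ≤ ∫ x, h x := fun t =>
    setIntegral_le_integral hhi (Eventually.of_forall hh0)
  have hWlim : Tendsto (fun t => ∫ x in Set.Iic t, h x) atTop (nhds (∫ x, h x)) :=
    (aecover_Iic tendsto_id).integral_tendsto_of_countably_generated hhi
  -- bounds
  have hlow : ∀ T κ, (∀ x, T - K ≤ x → x ≤ T → κ ≤ f x) → κ * μ ≤ ∫ x in Set.Iic T, h x := by
    intro T κ hκ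
    rw [← hW, hμ, Finset.mul_sum]
    refine Finset.sum_le_sum fun j _ => ?_
    have := intervalIntegral.integral_mono_on (μ := volume) (a := T - c j) (b := T)
      (f := fun _ => κ) (g := f) (by linarith [hc j]) (by simp) (hii _ _)
      (fun x hx => hκ x (by linarith [hx.1, hK j]) hx.2)
    rw [intervalIntegral.integral_const, smul_eq_mul] at this
    nlinarith [hp j, mul_le_mul_of_nonneg_left this (hp j).le]
  have hupp : ∀ T κ, (∀ x, T - K ≤ x → x ≤ T → f x ≤ κ) → ∫ x in Set.Iic T, h x ≤ κ * μ := by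
    intro T κ hκ
    rw [← hW, hμ, Finset.mul_sum]
    refine Finset.sum_le_sum fun j _ => ?_
    have := intervalIntegral.integral_mono_on (μ := volume) (a := T - c j) (b := T)
      (g := fun _ => κ) (f := f) (by linarith [hc j]) (hii _ _) (by simp)
      (fun x hx => hκ x (by linarith [hx.1, hK j]) hx.2)
    rw [intervalIntegral.integral_const, smul_eq_mul] at this
    nlinarith [hp j, mul_le_mul_of_nonneg_left this (hp j).le]
  have hK0 : 0 ≤ K := (hc j0).le.trans (hK j0)
  -- f x ≤ exp(θ δ) f y when y ≤ x ≤ y + δ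
  have hsl : ∀ δ x y, y ≤ x → x ≤ y + δ → f x ≤ Real.exp (θ * δ) * f y := by
    intro δ x y h1 h2
    have := hslow y (x - y) (by linarith)
    rw [add_sub_cancel] at this
    refine this.trans ?_
    have := hf0 y
    gcongr
    linarith
  have hbdd : ∀ x, |f x| ≤ (∫ x, h x) / μ * Real.exp (θ * K) := by
    intro x
    rw [abs_of_nonneg (hf0 x)]
    have h1 := hlow x (Real.exp (-(θ * K)) * f x) (by
      intro y h1 h2
      have := hsl K x y h2 (by linarith)
      calc _ ≤ Real.exp (-(θ * K)) * (Real.exp (θ * K) * f y) := by gcongr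
        _ = f y := by rw [← mul_assoc, ← Real.exp_add]; simp)
    have h2 := h1.trans (hWle x)
    rw [← le_div_iff₀ hμ0, Real.exp_neg, inv_mul_le_iff₀ (Real.exp_pos _)] at h2
    linarith
  have hexp : Tendsto (fun δ : ℝ => Real.exp (θ * δ)) (nhdsWithin 0 (Set.Ioi 0)) (nhds 1) := by
    have : Continuous (fun δ : ℝ => Real.exp (θ * δ)) := by fun_prop
    have := this.tendsto 0
    simp only [mul_zero, Real.exp_zero] at this
    exact this.mono_left nhdsWithin_le_nhds
  obtain ⟨β, t, ht, hft, hβ⟩ := ren_seq f _ hbdd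
  obtain ⟨α, t', ht', hft', hα⟩ := ren_seq (fun x => - f x) _ (fun x => by
    rw [abs_neg]; exact hbdd x)
  have hsβ := ren_shift c p hp hp1 f h hf hh β hβ
  have hsα := ren_shift c p hp hp1 (fun x => - f x) (fun x => - h x) (fun t => by
    rw [hf t]; simp [Finset.sum_neg_distrib]; ring) (by simpa using hh.neg) α hα
  have hβ1 : β ≤ (∫ x, h x) / μ := by
    have key : ∀ δ > 0, β ≤ (∫ x, h x) / μ * Real.exp (θ * δ) := by
      intro δ hδ
      obtain ⟨R, hR⟩ := ren_net c hc j0 hd δ hδ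
      obtain ⟨s, hs1, hs2⟩ := hR K
      refine le_of_forall_pos_sub_le fun ε hε => ?_
      have hev : ∀ᶠ n in atTop, ∀ y ∈ s, β - ε < f (t n - y) := by
        rw [eventually_all_finset]
        exact fun y hy => (hsβ y (hs1 y hy) t ht hft).eventually (lt_mem_nhds (by linarith))
      obtain ⟨n, hn⟩ := hev.exists
      have h1 := hlow (t n - R) (Real.exp (-(θ * δ)) * (β - ε)) (by
        intro x h1 h2
        obtain ⟨⟨y, hy, hy1, hy2⟩, -⟩ := hs2 (t n - x) (by linarith) (by linarith)
        have := hsl δ (t n - y) x (by linarith) (by linarith)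
        have h3 := (hn y hy).le.trans this
        calc _ ≤ Real.exp (-(θ * δ)) * (Real.exp (θ * δ) * f x) := by gcongr
          _ = f x := by rw [← mul_assoc, ← Real.exp_add]; simp)
      have h2 := h1.trans (hWle _)
      rw [← le_div_iff₀ hμ0, Real.exp_neg, inv_mul_le_iff₀ (Real.exp_pos _)] at h2
      linarith
    have l := hexp.const_mul ((∫ x, h x) / μ)
    rw [mul_one] at l
    exact ge_of_tendsto l (eventually_mem_nhdsWithin.mono key)
  have hα1 : (∫ x, h x) / μ ≤ -α := by
    have key : ∀ δ > 0, (∫ x, h x) / μ ≤ Real.exp (θ * δ) * (-α) := by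
      intro δ hδ
      obtain ⟨R, hR⟩ := ren_net c hc j0 hd δ hδ
      obtain ⟨s, hs1, hs2⟩ := hR K
      have key2 : ∀ ε > 0, (∫ x, h x) ≤ Real.exp (θ * δ) * (-α + ε) * μ := by
        intro ε hε
        have hev : ∀ᶠ n in atTop, ∀ y ∈ s, α - ε < - f (t' n - y) := by
          rw [eventually_all_finset]
          exact fun y hy => (hsα y (hs1 y hy) t' ht' hft').eventually (lt_mem_nhds (by linarith))
        have hl : Tendsto (fun n => ∫ x in Set.Iic (t' n - R), h x) atTop (nhds (∫ x, h x)) :=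
          hWlim.comp (tendsto_atTop_add_const_right _ (-R) ht')
        refine le_of_tendsto hl (hev.mono fun n hn => ?_)
        apply hupp
        intro x h1 h2
        obtain ⟨-, ⟨y, hy, hy1, hy2⟩⟩ := hs2 (t' n - x) (by linarith) (by linarith)
        have := hsl δ x (t' n - y) (by linarith) (by linarith)
        refine this.trans ?_
        have := hn y hy
        gcongr
        linarith
      rw [div_le_iff₀ hμ0]
      have l : Tendsto (fun ε : ℝ => Real.exp (θ * δ) * (-α + ε) * μ)
          (nhdsWithin 0 (Set.Ioi 0)) (nhds (Real.exp (θ * δ) * (-α) * μ)) := by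
        have : Continuous (fun ε : ℝ => Real.exp (θ * δ) * (-α + ε) * μ) := by fun_prop
        have := this.tendsto 0
        rw [add_zero] at this
        exact this.mono_left nhdsWithin_le_nhds
      exact ge_of_tendsto l (eventually_mem_nhdsWithin.mono key2)
    have l := hexp.mul_const (-α)
    rw [one_mul] at l
    exact ge_of_tendsto l (eventually_mem_nhdsWithin.mono key)
  rw [Metric.tendsto_nhds]
  intro ε hε
  filter_upwards [hβ ε hε, hα ε hε] with x h1 h2
  rw [Real.dist_eq, abs_lt]
  constructor <;> linarith

lemma geo_affine (φ : ℝ → ℝ) (r : ℝ) (hr : 0 < r)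
    (h : ∀ x y, dist (φ x) (φ y) = r * dist x y) :
    ∃ m : ℝ, |m| = r ∧ m ≠ 0 ∧ ∀ x, φ x = φ 0 + m * x := by
  have h1 : |φ 1 - φ 0| = r := by simpa [Real.dist_eq] using h 1 0
  have hm : φ 1 - φ 0 ≠ 0 := by
    intro h0; rw [h0, abs_zero] at h1; exact hr.ne h1
  refine ⟨φ 1 - φ 0, h1, hm, fun x => ?_⟩
  have a1 : (φ x - φ 0) ^ 2 = r ^ 2 * x ^ 2 := by
    have := h x 0
    rw [Real.dist_eq, Real.dist_eq, sub_zero] at this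
    rw [← sq_abs, this, mul_pow, sq_abs]
  have a2 : (φ 1 - φ 0) ^ 2 = r ^ 2 := by rw [← sq_abs, h1]
  have a3 : (φ x - φ 1) ^ 2 = r ^ 2 * (x - 1) ^ 2 := by
    have := h x 1
    rw [Real.dist_eq, Real.dist_eq] at this
    rw [← sq_abs, this, mul_pow, sq_abs]
  have : (φ 1 - φ 0) * ((φ x - φ 0) - (φ 1 - φ 0) * x) = 0 := by nlinarith
  have := (mul_eq_zero.1 this).resolve_left hm
  linarith

open scoped Pointwise in
lemma geo_vol (φ : ℝ → ℝ) (m : ℝ) (h : ∀ x, φ x = φ 0 + m * x) (S : Set ℝ) :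
    volume.real (φ '' S) = |m| * volume.real S := by
  have : φ '' S = (fun x => φ 0 + x) '' (m • S) := by
    rw [← Set.image_smul, Set.image_image]
    exact Set.image_congr fun x _ => by rw [h x, smul_eq_mul]
  rw [this, Measure.real, Set.image_add_left, measure_preimage_add, Measure.addHaar_smul]
  simp [Measure.real, ENNReal.toReal_mul]

lemma geo_hull (F : Set ℝ) (hFcpt : IsCompact F) (hFne : F.Nonempty) :
    ∃ A B : ℝ, A ≤ B ∧ A ∈ F ∧ B ∈ F ∧ convexHull ℝ F = Set.Icc A B := by
  have h1 := hFcpt.sInf_mem hFne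
  have h2 := hFcpt.sSup_mem hFne
  have h3 : sInf F ≤ sSup F := csInf_le hFcpt.bddBelow h2
  refine ⟨sInf F, sSup F, h3, h1, h2, ?_⟩
  apply Set.Subset.antisymm
  · exact convexHull_min (fun x hx => ⟨csInf_le hFcpt.bddBelow hx, le_csSup hFcpt.bddAbove hx⟩)
      (convex_Icc _ _)
  · rw [← segment_eq_Icc h3]
    exact segment_subset_convexHull h1 h2

lemma geo_mem (F : Set ℝ) (hFcpt : IsCompact F) (ε : ℝ) (hε : 0 ≤ ε) (x : ℝ) :
    x ∈ Metric.cthickening ε F ↔ ∃ y ∈ F, |x - y| ≤ ε := by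
  rw [hFcpt.cthickening_eq_biUnion_closedBall hε]
  simp [Real.dist_eq]

lemma geo_gap (F : Set ℝ) (hFcpt : IsCompact F) (a b : ℝ) (hab : a < b) (ha : a ∈ F) (hb : b ∈ F)
    (hd : ∀ x ∈ F, x ∉ Set.Ioo a b) (ε : ℝ) (hε : 0 ≤ ε) :
    volume.real (Metric.cthickening ε F ∩ Set.Ioo a b) = min (2 * ε) (b - a) := by
  have h1 : Set.Ioo a b \ Metric.cthickening ε F = Set.Ioo (a + ε) (b - ε) := by
    ext x
    rw [Set.mem_sdiff, geo_mem F hFcpt ε hε]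
    push Not
    constructor
    · rintro ⟨⟨h1, h2⟩, h3⟩
      have := h3 a ha
      have h4 := h3 b hb
      rw [abs_of_pos (by linarith)] at this
      rw [abs_of_neg (by linarith)] at h4
      constructor <;> linarith
    · rintro ⟨h1, h2⟩
      refine ⟨⟨by linarith, by linarith⟩, fun y hy => ?_⟩
      have := hd y hy
      rw [Set.mem_Ioo] at this
      push Not at this
      rcases le_or_gt y a with h | h
      · exact lt_of_lt_of_le (by linarith) (le_abs_self _)
      · have := this h
        exact lt_of_lt_of_le (by linarith) (neg_le_abs _)
  have h2 := measureReal_inter_add_sdiff (μ := volume) (s := Set.Ioo a b)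
    (Metric.isClosed_cthickening (δ := ε) (E := F)).measurableSet (by simp)
  rw [h1, Real.volume_real_Ioo, Real.volume_real_Ioo, Set.inter_comm] at h2
  rw [max_eq_left (by linarith : (0:ℝ) ≤ b - a)] at h2
  rcases le_total (b - ε - (a + ε)) 0 with h | h
  · rw [max_eq_right h] at h2
    rw [min_eq_right (by linarith)]; linarith
  · rw [max_eq_left h] at h2
    rw [min_eq_left (by linarith)]; linarith

theorem geo_main
    (J Q : ℕ) (hQ : 1 ≤ Q)
    (φ : Fin J → ℝ → ℝ)
    (r : Fin J → ℝ) (hr0 : ∀ j, 0 < r j)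
    (hsim : ∀ j x y, dist (φ j x) (φ j y) = r j * dist x y)
    (F : Set ℝ) (hFcpt : IsCompact F)
    (hFinv : F = ⋃ j, φ j '' F) (A B : ℝ) (hAB : A ≤ B) (hA : A ∈ F) (hB : B ∈ F)
    (hFI : F ⊆ Set.Icc A B)
    (hOSC₂ : ∀ j k, j ≠ k →
      Disjoint (φ j '' Set.Ioo A B) (φ k '' Set.Ioo A B))
    (a b : Fin Q → ℝ)
    (hab : ∀ q, a q < b q)
    (hdisj : ∀ q q', q ≠ q' → Disjoint (Set.Ioo (a q) (b q)) (Set.Ioo (a q') (b q')))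
    (hgaps : Set.Icc A B \ (⋃ j, φ j '' Set.Icc A B) = ⋃ q, Set.Ioo (a q) (b q))
    (ε : ℝ) (hε : 0 ≤ ε) :
    volume.real (Metric.cthickening ε F ∩ Set.Icc A B) =
      ∑ j, r j * volume.real (Metric.cthickening (ε / r j) F ∩ Set.Icc A B) +
      ∑ q, min (2 * ε) (b q - a q) := by
  have hlt : A < B := by
    rcases hAB.lt_or_eq with h | h
    · exact h
    · exfalso
      subst h
      have : Set.Ioo (a ⟨0, hQ⟩) (b ⟨0, hQ⟩) ⊆ {A} := by
        intro x hx
        have : x ∈ ⋃ q, Set.Ioo (a q) (b q) := Set.mem_iUnion.2 ⟨_, hx⟩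
        rw [← hgaps] at this
        simpa using this.1
      exact (Set.Ioo_infinite (hab ⟨0, hQ⟩)) ((Set.finite_singleton A).subset this)
  choose m hm1 hm0 hm using fun j => geo_affine (φ j) (r j) (hr0 j) (hsim j)
  have hcont : ∀ j, Continuous (φ j) := fun j => by
    rw [show φ j = fun x => φ j 0 + m j * x from funext (hm j)]; fun_prop
  have hinv : ∀ j x y, φ j x = y ↔ x = (y - φ j 0) / m j := by
    intro j x y
    rw [hm j x, eq_div_iff (hm0 j)]
    constructor <;> intro h <;> linarith
  have hinj : ∀ j, Function.Injective (φ j) := fun j x y hxy => by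
    rw [hinv] at hxy
    rw [hxy, ← (hinv j y (φ j y)).1 rfl]
  have hsurj : ∀ j z, ∃ u, φ j u = z := fun j z => ⟨_, (hinv j _ z).2 rfl⟩
  have hFmap : ∀ j, ∀ x ∈ F, φ j x ∈ F := fun j x hx => by
    rw [hFinv]; exact Set.mem_iUnion.2 ⟨j, x, hx, rfl⟩
  have hopen : ∀ j, IsOpen (φ j '' Set.Ioo A B) := by
    intro j
    have : φ j '' Set.Ioo A B = (fun y => (y - φ j 0) / m j) ⁻¹' Set.Ioo A B := by
      ext y
      constructor
      · rintro ⟨x, hx, hxy⟩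
        rw [hinv] at hxy
        rw [Set.mem_preimage, ← hxy]; exact hx
      · intro hy
        exact ⟨_, hy, (hinv j _ y).2 rfl⟩
    rw [this]
    exact isOpen_Ioo.preimage (by fun_prop)
  have hcl : ∀ k, φ k '' Set.Icc A B ⊆ closure (φ k '' Set.Ioo A B) := by
    intro k
    rw [← closure_Ioo hlt.ne]
    exact image_closure_subset_closure_image (hcont k)
  have hdis2 : ∀ j k, j ≠ k → Disjoint (φ j '' Set.Ioo A B) (φ k '' Set.Icc A B) := fun j k hjk =>
    ((hOSC₂ j k hjk).closure_right (hopen j)).mono_right (hcl k)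
  -- F inside φ_j(I)
  have hpiece : ∀ j, Metric.cthickening ε F ∩ φ j '' Set.Icc A B =
      φ j '' (Metric.cthickening (ε / r j) F ∩ Set.Icc A B) := by
    intro j
    ext z
    constructor
    · rintro ⟨h1, x, hx, rfl⟩
      refine ⟨x, ⟨?_, hx⟩, rfl⟩
      rw [geo_mem F hFcpt _ (div_nonneg hε (hr0 j).le)]
      rw [geo_mem F hFcpt _ hε] at h1
      obtain ⟨z, hz, hxz⟩ := h1
      obtain ⟨u, rfl⟩ := hsurj j z
      have hd := hsim j x u
      rw [Real.dist_eq, Real.dist_eq] at hd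
      have hxu : |x - u| ≤ ε / r j := by
        rw [le_div_iff₀ (hr0 j)]; linarith
      by_cases hu : u ∈ Set.Ioo A B
      · refine ⟨u, ?_, hxu⟩
        rw [hFinv] at hz
        obtain ⟨k, w, hw, hwz⟩ := Set.mem_iUnion.1 hz
        by_cases hjk : j = k
        · subst hjk
          rw [← hinj j hwz]; exact hw
        · exact absurd ⟨w, hFI hw, hwz⟩
            (Set.disjoint_left.1 (hdis2 j k hjk) ⟨u, hu, rfl⟩)
      · rw [Set.mem_Ioo] at hu
        push Not at hu
        rcases le_or_gt u A with h | h
        · refine ⟨A, hA, ?_⟩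
          rw [abs_of_nonneg (by linarith [hx.1])]
          linarith [le_abs_self (x - u)]
        · have := hu h
          refine ⟨B, hB, ?_⟩
          rw [abs_of_nonpos (by linarith [hx.2])]
          linarith [neg_le_abs (x - u)]
    · rintro ⟨x, ⟨h1, hx⟩, rfl⟩
      refine ⟨?_, x, hx, rfl⟩
      rw [geo_mem F hFcpt _ (div_nonneg hε (hr0 j).le)] at h1
      rw [geo_mem F hFcpt _ hε]
      obtain ⟨y, hy, hxy⟩ := h1
      refine ⟨φ j y, hFmap j y hy, ?_⟩
      have hd := hsim j x y
      rw [Real.dist_eq, Real.dist_eq] at hd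
      rw [le_div_iff₀ (hr0 j)] at hxy
      linarith
  -- gap end points
  have hgapF : ∀ q, ∀ x ∈ F, x ∉ Set.Ioo (a q) (b q) := by
    intro q x hx hxq
    have h1 : x ∈ ⋃ q, Set.Ioo (a q) (b q) := Set.mem_iUnion.2 ⟨q, hxq⟩
    rw [← hgaps] at h1
    apply h1.2
    rw [hFinv] at hx
    obtain ⟨k, w, hw, hwz⟩ := Set.mem_iUnion.1 hx
    exact Set.mem_iUnion.2 ⟨k, w, hFI hw, hwz⟩
  have hgsub : ∀ q, Set.Ioo (a q) (b q) ⊆ Set.Icc A B \ (⋃ j, φ j '' Set.Icc A B) := fun q => by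
    rw [hgaps]; exact Set.subset_iUnion (fun q => Set.Ioo (a q) (b q)) q
  have hend : ∀ q, ∀ e ∈ Set.Icc (a q) (b q), e ∉ Set.Ioo (a q) (b q) → e ∈ F := by
    intro q e he hne
    rw [← closure_Ioo (hab q).ne] at he
    have heI : e ∈ Set.Icc A B :=
      closure_minimal ((hgsub q).trans Set.sdiff_subset) isClosed_Icc he
    have hmeet : ∀ U : Set ℝ, IsOpen U → e ∈ U → ∃ x ∈ U, x ∈ Set.Ioo (a q) (b q) := by
      intro U hU heU
      obtain ⟨x, hx1, hx2⟩ := mem_closure_iff.1 he U hU heU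
      exact ⟨x, hx1, hx2⟩
    have heU : e ∈ ⋃ j, φ j '' Set.Icc A B := by
      by_contra hcon
      have : e ∈ ⋃ q, Set.Ioo (a q) (b q) := by rw [← hgaps]; exact ⟨heI, hcon⟩
      obtain ⟨q', hq'⟩ := Set.mem_iUnion.1 this
      obtain ⟨x, hx1, hx2⟩ := hmeet _ isOpen_Ioo hq'
      by_cases hqq : q' = q
      · subst hqq; exact hne hq'
      · exact Set.disjoint_left.1 (hdisj q' q hqq) hx1 hx2
    obtain ⟨j, y, hy, rfl⟩ := Set.mem_iUnion.1 heU
    apply hFmap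
    by_cases hyo : y ∈ Set.Ioo A B
    · exfalso
      obtain ⟨x, hx1, hx2⟩ := hmeet _ (hopen j) ⟨y, hyo, rfl⟩
      exact (hgsub q hx2).2 (Set.mem_iUnion.2 ⟨j, Set.image_mono Set.Ioo_subset_Icc_self hx1⟩)
    · rcases hy.1.eq_or_lt with h | h
      · rwa [← h]
      · rcases hy.2.eq_or_lt with h' | h'
        · rwa [h']
        · exact absurd ⟨h, h'⟩ hyo
  have haF : ∀ q, a q ∈ F := fun q => hend q _ ⟨le_rfl, (hab q).le⟩ (by simp)
  have hbF : ∀ q, b q ∈ F := fun q => hend q _ ⟨(hab q).le, le_rfl⟩ (by simp)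
  -- measure
  have hmC : MeasurableSet (Metric.cthickening ε F) := Metric.isClosed_cthickening.measurableSet
  have hmI : ∀ j, MeasurableSet (φ j '' Set.Icc A B) := fun j =>
    (isCompact_Icc.image (hcont j)).isClosed.measurableSet
  have hfin : ∀ S : Set ℝ, S ⊆ Set.Icc A B → volume S ≠ ⊤ := fun S hS =>
    ((measure_mono hS).trans_lt (by simp)).ne
  have hsubI : ∀ j, φ j '' Set.Icc A B ⊆ Set.Icc A B := by
    intro j
    have : φ j '' Set.Icc A B = (φ j) '' (convexHull ℝ {A, B}) := by
      rw [convexHull_pair, segment_eq_Icc hAB]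
    rintro _ ⟨x, hx, rfl⟩
    have h1 := hFI (hFmap j A hA)
    have h2 := hFI (hFmap j B hB)
    rw [hm j] at h1 h2 ⊢
    obtain ⟨h1, h1'⟩ := h1
    obtain ⟨h2, h2'⟩ := h2
    obtain ⟨h3, h4⟩ := hx
    rcases le_total 0 (m j) with h | h
    · constructor <;> nlinarith
    · constructor <;> nlinarith
  set C := Metric.cthickening ε F
  have hsplit := measureReal_inter_add_sdiff (μ := volume) (s := C ∩ Set.Icc A B)
    (MeasurableSet.iUnion hmI) (hfin _ Set.inter_subset_right)
  have e1 : C ∩ Set.Icc A B ∩ (⋃ j, φ j '' Set.Icc A B) = ⋃ j, (C ∩ φ j '' Set.Icc A B) := by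
    rw [Set.inter_assoc, Set.inter_eq_right.2 (Set.iUnion_subset hsubI), Set.inter_iUnion]
  have e2 : (C ∩ Set.Icc A B) \ (⋃ j, φ j '' Set.Icc A B) = ⋃ q, (C ∩ Set.Ioo (a q) (b q)) := by
    rw [Set.inter_sdiff_assoc, hgaps, Set.inter_iUnion]
  have m1 : volume.real (⋃ j, (C ∩ φ j '' Set.Icc A B)) =
      ∑ j, volume.real (C ∩ φ j '' Set.Icc A B) := by
    unfold Measure.real
    rw [measure_iUnion₀, tsum_fintype, ENNReal.toReal_sum]
    · exact fun j _ => hfin _ (Set.inter_subset_right.trans (hsubI j))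
    · intro j k hjk
      have hss : (C ∩ φ j '' Set.Icc A B) ∩ (C ∩ φ k '' Set.Icc A B) ⊆ φ j '' {A, B} := by
        rintro z ⟨⟨-, x, hx, rfl⟩, -, hy⟩
        refine ⟨x, ?_, rfl⟩
        by_contra hxn
        simp only [Set.mem_insert_iff, Set.mem_singleton_iff, not_or] at hxn
        have hxo : x ∈ Set.Ioo A B :=
          ⟨lt_of_le_of_ne hx.1 (Ne.symm hxn.1), lt_of_le_of_ne hx.2 hxn.2⟩
        exact Set.disjoint_left.1 (hdis2 j k hjk) ⟨x, hxo, rfl⟩ hy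
      exact measure_mono_null hss ((Set.toFinite _).measure_zero _)
    · exact fun j => (hmC.inter (hmI j)).nullMeasurableSet
  have m2 : volume.real (⋃ q, (C ∩ Set.Ioo (a q) (b q))) =
      ∑ q, volume.real (C ∩ Set.Ioo (a q) (b q)) := by
    unfold Measure.real
    rw [measure_iUnion, tsum_fintype, ENNReal.toReal_sum]
    · exact fun q _ => hfin _ (Set.inter_subset_right.trans ((hgsub q).trans Set.sdiff_subset))
    · exact fun q q' hq => (hdisj q q' hq).mono Set.inter_subset_right Set.inter_subset_right
    · exact fun q => hmC.inter measurableSet_Ioo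
  rw [← hsplit, e1, e2, m1, m2]
  congr 1
  · refine Finset.sum_congr rfl fun j _ => ?_
    rw [hpiece, geo_vol (φ j) (m j) (hm j), hm1]
  · exact Finset.sum_congr rfl fun q _ =>
      geo_gap F hFcpt _ _ (hab q) (haF q) (hbF q) (hgapF q) ε hε

lemma geo_outer (F : Set ℝ) (hFcpt : IsCompact F) (A B : ℝ) (hFI : F ⊆ Set.Icc A B)
    (ε : ℝ) (hε : 0 ≤ ε) :
    volume.real (Metric.cthickening ε F ∩ Set.Icc A B) ≤ volume.real (Metric.cthickening ε F) ∧
    volume.real (Metric.cthickening ε F) ≤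
      volume.real (Metric.cthickening ε F ∩ Set.Icc A B) + 2 * ε := by
  have hfin : volume (Metric.cthickening ε F) ≠ ⊤ :=
    hFcpt.isBounded.cthickening.measure_lt_top.ne
  have hs := measureReal_inter_add_sdiff (μ := volume) (s := Metric.cthickening ε F)
    (measurableSet_Icc (a := A) (b := B)) hfin
  have hsub : Metric.cthickening ε F \ Set.Icc A B ⊆ Set.Icc (A - ε) A ∪ Set.Icc B (B + ε) := by
    rintro x ⟨h1, h2⟩
    rw [geo_mem F hFcpt ε hε] at h1
    obtain ⟨y, hy, hxy⟩ := h1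
    rw [abs_le] at hxy
    have := hFI hy
    rw [Set.mem_Icc] at h2 this
    push Not at h2
    rcases le_or_gt A x with h | h
    · right; exact ⟨(h2 h).le, by linarith⟩
    · left; exact ⟨by linarith, h.le⟩
  have h1 : volume.real (Metric.cthickening ε F \ Set.Icc A B) ≤ 2 * ε := by
    refine (measureReal_mono hsub ((measure_union_le _ _).trans_lt (by simp)).ne).trans ?_
    refine (measureReal_union_le _ _).trans ?_
    rw [Real.volume_real_Icc_of_le (by linarith), Real.volume_real_Icc_of_le (by linarith)]
    linarith
  have h0 : 0 ≤ volume.real (Metric.cthickening ε F \ Set.Icc A B) := measureReal_nonneg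
  constructor <;> linarith

lemma gap_integral (D l : ℝ) (hD0 : 0 < D) (hD1 : D < 1) (hl : 0 < l) :
    Integrable (fun t : ℝ => Real.exp ((1 - D) * t) * min (2 * Real.exp (-t)) l) ∧
    (∫ t : ℝ, Real.exp ((1 - D) * t) * min (2 * Real.exp (-t)) l) =
      2 ^ (1 - D) * l ^ D / (D * (1 - D)) ∧
    Tendsto (fun t : ℝ => Real.exp ((1 - D) * t) * min (2 * Real.exp (-t)) l) atTop (nhds 0) := by
  have hD1' : 0 < 1 - D := by linarith
  set t0 := Real.log 2 - Real.log l with ht0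
  have he : Real.exp (-t0) = l / 2 := by
    rw [ht0, neg_sub, Real.exp_sub, Real.exp_log hl, Real.exp_log two_pos]
  set F := fun t : ℝ => Real.exp ((1 - D) * t) * min (2 * Real.exp (-t)) l with hF
  have c1 : Set.EqOn F (fun t => l * Real.exp ((1 - D) * t)) (Set.Iic t0) := by
    intro t ht
    have : Real.exp (-t0) ≤ Real.exp (-t) := Real.exp_le_exp.2 (neg_le_neg ht)
    simp only [hF]
    rw [min_eq_right (by linarith), mul_comm]
  have e2 : ∀ t, Real.exp ((1 - D) * t) * (2 * Real.exp (-t)) = 2 * Real.exp (-D * t) := by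
    intro t
    rw [mul_left_comm, ← Real.exp_add]; ring_nf
  have c2 : Set.EqOn F (fun t => 2 * Real.exp (-D * t)) (Set.Ioi t0) := by
    intro t ht
    have : Real.exp (-t) ≤ Real.exp (-t0) := Real.exp_le_exp.2 (neg_le_neg (le_of_lt ht))
    simp only [hF]
    rw [min_eq_left (by linarith), e2]
  have i1 : IntegrableOn F (Set.Iic t0) :=
    IntegrableOn.congr_fun ((integrableOn_exp_mul_Iic hD1' t0).const_mul l) c1.symm measurableSet_Iic
  have i2 : IntegrableOn F (Set.Ioi t0) :=
    IntegrableOn.congr_fun ((integrableOn_exp_mul_Ioi (neg_lt_zero.2 hD0) t0).const_mul 2) c2.symm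
      measurableSet_Ioi
  refine ⟨?_, ?_, ?_⟩
  · rw [← integrableOn_univ, ← Set.Iic_union_Ioi (a := t0)]
    exact i1.union i2
  · rw [← intervalIntegral.integral_Iic_add_Ioi i1 i2, setIntegral_congr_fun measurableSet_Iic c1,
      setIntegral_congr_fun measurableSet_Ioi c2, integral_const_mul, integral_const_mul,
      integral_exp_mul_Iic hD1', integral_exp_mul_Ioi (neg_lt_zero.2 hD0)]
    have a1 : l * Real.exp ((1 - D) * t0) = 2 ^ (1 - D) * l ^ D := by
      rw [Real.rpow_def_of_pos two_pos, Real.rpow_def_of_pos hl]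
      nth_rewrite 1 [← Real.exp_log hl]
      rw [← Real.exp_add, ← Real.exp_add, ht0]
      ring_nf
    have a2 : 2 * Real.exp (-D * t0) = 2 ^ (1 - D) * l ^ D := by
      rw [Real.rpow_def_of_pos two_pos, Real.rpow_def_of_pos hl]
      nth_rewrite 1 [← Real.exp_log (two_pos (α := ℝ))]
      rw [← Real.exp_add, ← Real.exp_add, ht0]
      ring_nf
    rw [← mul_div_assoc, a1, mul_div_assoc', mul_neg, a2]
    field_simp
    ring
  · have hlim : Tendsto (fun t : ℝ => 2 * Real.exp (-D * t)) atTop (nhds 0) := by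
      have : Tendsto (fun t : ℝ => -D * t) atTop atBot :=
        tendsto_id.const_mul_atTop_of_neg (neg_lt_zero.2 hD0)
      simpa using (Real.tendsto_exp_atBot.comp this).const_mul 2
    refine squeeze_zero (fun t => by positivity) (fun t => ?_) hlim
    rw [← e2]
    simp only [hF]
    gcongr
    exact min_le_left _ _

/-- a non-lattice self-similar fractal `F ⊆ ℝ` (open set condition
with the interior of `I = [F]` as feasible open set, with gaps of lengths
`l₁, …, l_Q`) is Minkowski measurable with Minkowski content
`(2^{1-D} ∑_q l_q^D) / (D(1-D) ∑_j r_j^D log r_j⁻¹)`. -/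
theorem stmt_3
    (J Q : ℕ) (hJ : 2 ≤ J) (hQ : 1 ≤ Q)
    (φ : Fin J → ℝ → ℝ)
    (r : Fin J → ℝ) (hr0 : ∀ j, 0 < r j) (hr1 : ∀ j, r j < 1)
    (hsim : ∀ j x y, dist (φ j x) (φ j y) = r j * dist x y)
    (F : Set ℝ) (hFcpt : IsCompact F) (hFne : F.Nonempty)
    (hFinv : F = ⋃ j, φ j '' F)
    -- open set condition with the interior of I = [F] as feasible open set
    (hOSC₁ : ∀ j, φ j '' interior (convexHull ℝ F) ⊆ interior (convexHull ℝ F))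
    (hOSC₂ : ∀ j k, j ≠ k →
      Disjoint (φ j '' interior (convexHull ℝ F)) (φ k '' interior (convexHull ℝ F)))
    -- the gaps: I \ ⋃ⱼ φⱼ(I) consists of Q open intervals of lengths l₁, …, l_Q
    (l : Fin Q → ℝ) (a b : Fin Q → ℝ)
    (hab : ∀ q, a q < b q)
    (hlen : ∀ q, l q = b q - a q)
    (hdisj : ∀ q q', q ≠ q' → Disjoint (Set.Ioo (a q) (b q)) (Set.Ioo (a q') (b q')))
    (hgaps : convexHull ℝ F \ (⋃ j, φ j '' convexHull ℝ F) = ⋃ q, Set.Ioo (a q) (b q))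
    -- the Minkowski dimension D ∈ (0,1)
    (D : ℝ) (hD0 : 0 < D) (hD1 : D < 1) (hD : ∑ j, r j ^ D = 1)
    -- non-lattice type
    (hnonlat : Dense ((AddSubgroup.closure (Set.range fun j => Real.log (r j)) :
        AddSubgroup ℝ) : Set ℝ)) :
    0 < (2 ^ (1 - D) * ∑ q, l q ^ D) / (D * (1 - D) * ∑ j, r j ^ D * Real.log (r j)⁻¹) ∧
    Tendsto (fun ε : ℝ => (volume (Metric.cthickening ε F)).toReal * ε ^ (D - 1))
      (nhdsWithin 0 (Set.Ioi 0))
      (nhds ((2 ^ (1 - D) * ∑ q, l q ^ D) /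
        (D * (1 - D) * ∑ j, r j ^ D * Real.log (r j)⁻¹))) := by
  obtain ⟨A, B, hAB, hA, hB, hI⟩ := geo_hull F hFcpt hFne
  have hFI : F ⊆ Set.Icc A B := hI ▸ subset_convexHull ℝ F
  simp only [hI, interior_Icc] at hOSC₂ hgaps
  have hD1' : 0 < 1 - D := by linarith
  have hl0 : ∀ q, 0 < l q := fun q => by rw [hlen]; linarith [hab q]
  have hc0 : ∀ j, 0 < -Real.log (r j) := fun j => neg_pos.2 (Real.log_neg (hr0 j) (hr1 j))
  have hp0 : ∀ j, 0 < r j ^ D := fun j => Real.rpow_pos_of_pos (hr0 j) D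
  have hμ0 : 0 < ∑ j, r j ^ D * Real.log (r j)⁻¹ :=
    Finset.sum_pos (fun j _ => mul_pos (hp0 j) (by rw [Real.log_inv]; exact hc0 j))
      ⟨⟨0, by omega⟩, Finset.mem_univ _⟩
  have hl1 : 0 < ∑ q, l q ^ D :=
    Finset.sum_pos (fun q _ => Real.rpow_pos_of_pos (hl0 q) D) ⟨⟨0, by omega⟩, Finset.mem_univ _⟩
  refine ⟨by positivity, ?_⟩
  set g : ℝ → ℝ := fun ε => volume.real (Metric.cthickening ε F ∩ Set.Icc A B) with hg
  have hgmono : Monotone g := fun x y hxy =>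
    measureReal_mono (Set.inter_subset_inter_left _ (Metric.cthickening_mono hxy F))
      ((measure_mono Set.inter_subset_right).trans_lt (by simp)).ne
  have hg0 : ∀ x, 0 ≤ g x := fun x => measureReal_nonneg
  have hgL : ∀ x, g x ≤ B - A := fun x => by
    rw [← Real.volume_real_Icc_of_le hAB]
    exact measureReal_mono Set.inter_subset_right (by simp)
  have hgeq : ∀ ε, 0 ≤ ε → g ε = ∑ j, r j * g (ε / r j) + ∑ q, min (2 * ε) (l q) := by
    intro ε hε
    simp only [hlen]
    exact geo_main J Q hQ φ r hr0 hsim F hFcpt hFinv A B hAB hA hB hFI hOSC₂ a b hab hdisj hgaps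
      ε hε
  set f : ℝ → ℝ := fun t => Real.exp ((1 - D) * t) * g (Real.exp (-t)) with hf
  set h : ℝ → ℝ := fun t => ∑ q, Real.exp ((1 - D) * t) * min (2 * Real.exp (-t)) (l q) with hh
  have hfeq : ∀ t, f t = ∑ j, r j ^ D * f (t - -Real.log (r j)) + h t := by
    intro t
    simp only [hf, hh]
    rw [hgeq _ (Real.exp_pos _).le, mul_add, Finset.mul_sum, Finset.mul_sum]
    congr 1
    refine Finset.sum_congr rfl fun j _ => ?_
    have h1 : Real.exp (-(t - -Real.log (r j))) = Real.exp (-t) / r j := by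
      rw [show -(t - -Real.log (r j)) = -t - Real.log (r j) by ring, Real.exp_sub,
        Real.exp_log (hr0 j)]
    have h2 : r j ^ D * Real.exp ((1 - D) * (t - -Real.log (r j))) =
        Real.exp ((1 - D) * t) * r j := by
      rw [Real.rpow_def_of_pos (hr0 j)]
      nth_rewrite 3 [← Real.exp_log (hr0 j)]
      rw [← Real.exp_add, ← Real.exp_add]
      ring_nf
    rw [h1, ← mul_assoc, ← mul_assoc, h2]
  have hmeas : Measurable f := by
    have : Antitone (fun t : ℝ => g (Real.exp (-t))) := fun x y hxy =>
      hgmono (Real.exp_le_exp.2 (neg_le_neg hxy))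
    exact Measurable.mul (by fun_prop) this.measurable
  have hfi : ∀ t, IntegrableOn f (Set.Iic t) := by
    intro t
    refine Integrable.mono' ((integrableOn_exp_mul_Iic hD1' t).mul_const (B - A))
      hmeas.aestronglyMeasurable (Eventually.of_forall fun x => ?_)
    rw [Real.norm_eq_abs, abs_of_nonneg (mul_nonneg (Real.exp_pos _).le (hg0 _))]
    exact mul_le_mul_of_nonneg_left (hgL _) (Real.exp_pos _).le
  have hren := renewal (fun j => -Real.log (r j)) (fun j => r j ^ D) hc0 hp0 hD f h
    (fun t => mul_nonneg (Real.exp_pos _).le (hg0 _))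
    (fun t => Finset.sum_nonneg fun q _ => mul_nonneg (Real.exp_pos _).le
      (le_min (by positivity) (hl0 q).le))
    hfeq (1 - D) hD1'
    (by
      intro t s hs
      simp only [hf]
      rw [mul_add, Real.exp_add, ← mul_assoc, mul_comm (Real.exp ((1 - D) * s))]
      exact mul_le_mul_of_nonneg_left (hgmono (Real.exp_le_exp.2 (by linarith))) (by positivity))
    hfi (integrable_finsetSum _ fun q _ => (gap_integral D (l q) hD0 hD1 (hl0 q)).1)
    (by
      have := tendsto_finsetSum (Finset.univ : Finset (Fin Q)) fun q _ =>
        (gap_integral D (l q) hD0 hD1 (hl0 q)).2.2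
      simpa using this)
    (by simpa using hnonlat)
  have hhval : ∫ t, h t = 2 ^ (1 - D) * (∑ q, l q ^ D) / (D * (1 - D)) := by
    simp only [hh]
    rw [integral_finsetSum _ fun q _ => (gap_integral D (l q) hD0 hD1 (hl0 q)).1,
      Finset.mul_sum, Finset.sum_div]
    exact Finset.sum_congr rfl fun q _ => (gap_integral D (l q) hD0 hD1 (hl0 q)).2.1
  rw [hhval, div_div] at hren
  simp only [← Real.log_inv] at hren
  have htr : Tendsto (fun ε : ℝ => -Real.log ε) (nhdsWithin 0 (Set.Ioi 0)) atTop :=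
    tendsto_neg_atBot_atTop.comp Real.tendsto_log_nhdsGT_zero
  have h1 := hren.comp htr
  have h2 : Tendsto (fun ε : ℝ => 2 * ε ^ D) (nhdsWithin 0 (Set.Ioi 0)) (nhds 0) := by
    have : Tendsto (fun ε : ℝ => ε ^ D) (nhds 0) (nhds (0 ^ D)) :=
      (Real.continuous_rpow_const hD0.le).tendsto 0
    rw [Real.zero_rpow hD0.ne'] at this
    simpa using (this.mono_left nhdsWithin_le_nhds).const_mul 2
  have h3 := h1.add h2
  rw [add_zero] at h3
  have hfg : ∀ ε : ℝ, 0 < ε → f (-Real.log ε) = g ε * ε ^ (D - 1) := by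
    intro ε hε
    simp only [hf]
    rw [neg_neg, Real.exp_log hε, Real.rpow_def_of_pos hε, mul_comm]
    ring_nf
  refine tendsto_of_tendsto_of_tendsto_of_le_of_le' h1 h3 ?_ ?_
  · filter_upwards [self_mem_nhdsWithin] with ε hε
    have hε : 0 < ε := hε
    rw [Function.comp_apply, hfg ε hε]
    exact mul_le_mul_of_nonneg_right (geo_outer F hFcpt A B hFI ε hε.le).1
      (Real.rpow_pos_of_pos hε _).le
  · filter_upwards [self_mem_nhdsWithin] with ε hε
    have hε : 0 < ε := hε
    rw [Function.comp_apply, hfg ε hε]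
    have e : ε ^ D = ε * ε ^ (D - 1) := by
      rw [Real.rpow_sub_one hε.ne']; field_simp
    rw [e, ← mul_assoc, ← add_mul]
    exact mul_le_mul_of_nonneg_right (geo_outer F hFcpt A B hFI ε hε.le).2
      (Real.rpow_pos_of_pos hε _).le
end
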